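/- arXiv:1806.06933 — 7 statements merged into one kernel-verified Lean document; each statement's English description precedes it below -/
import Mathlib

section
/- In the distributional model of delegated search with n i.i.d. samples, there exists a threshold θ ≥ 0 and a choice of weak or strict comparison such that the single-proposal mechanism whose eligible set is R = {(x,y) : x ≥ θ} (respectively R = {(x,y) : x > θ}) guarantees the principal expected utility at least (1/2)·E[max_{1≤i≤n} x_i], no matter which eligible sample the agent proposes whenever at least one eligible sample exists. -/
open MeasureTheory ProbabilityTheory

/-!
This is a prophet inequality for the principal's utilities `Xᵢ`. Choose `θ ≥ 0` as a fixed point of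
the antitone continuous map `S(θ) = ∑ᵢ E[(Xᵢ - θ)⁺]`. Since `maxᵢ Xᵢ ≤ θ + ∑ᵢ (Xᵢ - θ)⁺`, the
expected maximum is at most `θ + S(θ) = 2θ`.

Let `q` be the probability that every sample lies below `θ`. Whenever some sample is eligible, the
principal gets at least `θ`, and if the `i`-th sample is the only eligible one, its excess
`(Xᵢ - θ)⁺` cannot be avoided by the agent. The excess of `Xᵢ` is independent of the event that all
other samples lie below `θ`, which has probability at least `q`, so the principal gets at least
`(1 - q) θ + q S(θ) = θ` in expectation.
-/

section Integrability

variable {Ω ι : Type*} [MeasurableSpace Ω] {μ : Measure Ω} {X : ι → Ω → ℝ}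

lemma integrable_iSup_of_forall_integrable [Finite ι] [Nonempty ι]
    (hX : ∀ i, Integrable (X i) μ) : Integrable (fun ω => ⨆ i, X i ω) μ := by
  have := Fintype.ofFinite ι
  have hsup : Integrable (Finset.univ.sup' Finset.univ_nonempty X) μ :=
    Finset.sup'_induction (p := fun f => Integrable f μ) _ _ (fun _ hf _ hg => hf.sup hg)
      fun i _ => hX i
  convert hsup using 1
  ext ω
  rw [Finset.sup'_apply, Finset.sup'_univ_eq_ciSup]

lemma integrable_of_integrable_iSup_of_nonneg [Finite ι]
    (hX : ∀ i, AEStronglyMeasurable (X i) μ) (hnonneg : ∀ i ω, 0 ≤ X i ω)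
    (hmax : Integrable (fun ω => ⨆ i, X i ω) μ) (i : ι) : Integrable (X i) μ := by
  refine hmax.mono' (hX i) (.of_forall fun ω => ?_)
  rw [Real.norm_of_nonneg (hnonneg i ω)]
  exact le_ciSup (f := fun j => X j ω) (Set.finite_range _).bddAbove i

end Integrability

section IndependentEvents

variable {Ω ι : Type*} [MeasurableSpace Ω] {μ : Measure Ω} {β : ι → Type*}
  [∀ i, MeasurableSpace (β i)] {f : ∀ i, Ω → β i}

lemma setIntegral_iInter_ne_preimage_eq_smul [Countable ι] (hindep : iIndepFun f μ)
    (hf : ∀ i, Measurable (f i)) {B : ∀ i, Set (β i)} (hB : ∀ i, MeasurableSet (B i)) (i : ι)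
    {E : Type*} [NormedAddCommGroup E] [NormedSpace ℝ E] {φ : β i → E}
    (hφ : AEStronglyMeasurable φ (μ.map (f i))) :
    ∫ ω in ⋂ j ≠ i, f j ⁻¹' B j, φ (f i ω) ∂μ
      = μ.real (⋂ j ≠ i, f j ⁻¹' B j) • ∫ ω, φ (f i ω) ∂μ := by
  let m : ι → MeasurableSpace Ω := fun j => MeasurableSpace.comap (f j) inferInstance
  have hm : ∀ j, m j ≤ ‹MeasurableSpace Ω› := fun j => (hf j).comap_le
  have hothers : Indep (⨆ j ∈ ({i}ᶜ : Set ι), m j) (m i) μ := by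
    simpa using indep_iSup_of_disjoint hm hindep (disjoint_compl_left (a := ({i} : Set ι)))
  refine hothers.setIntegral_eq_smul (iSup₂_le fun j _ => hm j) (hf i).aemeasurable ?_ hφ
  refine MeasurableSet.iInter fun j => MeasurableSet.iInter fun hj => ?_
  exact le_iSup₂ (f := fun j (_ : j ∈ ({i}ᶜ : Set ι)) => m j) j hj _ ⟨B j, hB j, rfl⟩

end IndependentEvents

section Excess

open Set

variable {Ω ι : Type*} [MeasurableSpace Ω]

lemma integrable_posPart_sub_const {μ : Measure Ω} [IsFiniteMeasure μ] {f : Ω → ℝ}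
    (hf : Integrable f μ) (θ : ℝ) : Integrable (fun ω => (f ω - θ)⁺) μ :=
  (hf.sub (integrable_const θ)).pos_part

lemma lipschitzWith_integral_posPart_sub {μ : Measure Ω} [IsFiniteMeasure μ] {f : Ω → ℝ}
    (hf : Integrable f μ) :
    LipschitzWith (measureUnivNNReal μ) fun θ : ℝ => ∫ ω, (f ω - θ)⁺ ∂μ := by
  refine LipschitzWith.of_le_add_mul _ fun a b => ?_
  have hpointwise (ω : Ω) : (f ω - a)⁺ ≤ (f ω - b)⁺ + dist a b := by
    have hdist : b - a ≤ dist a b := by rw [dist_comm]; exact le_abs_self _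
    exact sup_le (by linarith [le_posPart (f ω - b)]) (by positivity)
  calc ∫ ω, (f ω - a)⁺ ∂μ
      ≤ ∫ ω, ((f ω - b)⁺ + dist a b) ∂μ :=
        integral_mono (integrable_posPart_sub_const hf a)
          ((integrable_posPart_sub_const hf b).add (integrable_const _)) hpointwise
    _ = ∫ ω, (f ω - b)⁺ ∂μ + measureUnivNNReal μ * dist a b := by
        rw [integral_add (integrable_posPart_sub_const hf b) (integrable_const _), integral_const]
        rfl

variable [Fintype ι]

/-- The expected total excess `∑ᵢ E[(Xᵢ - θ)⁺]` of the random variables `Xᵢ` over the threshold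
`θ`; its fixed points are the thresholds used in the prophet inequality. -/
noncomputable def expectedExcess (X : ι → Ω → ℝ) (μ : Measure Ω) (θ : ℝ) : ℝ :=
  ∑ i, ∫ ω, (X i ω - θ)⁺ ∂μ

lemma expectedExcess_nonneg (X : ι → Ω → ℝ) (μ : Measure Ω) (θ : ℝ) :
    0 ≤ expectedExcess X μ θ :=
  Finset.sum_nonneg fun _ _ => integral_nonneg fun _ => posPart_nonneg _

variable {X : ι → Ω → ℝ} {μ : Measure Ω}

lemma antitone_expectedExcess [IsFiniteMeasure μ] (hX : ∀ i, Integrable (X i) μ) :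
    Antitone (expectedExcess X μ) := fun a b hab =>
  Finset.sum_le_sum fun i _ =>
    integral_mono (integrable_posPart_sub_const (hX i) b) (integrable_posPart_sub_const (hX i) a)
      fun _ => posPart_mono (sub_le_sub_left hab _)

lemma continuous_expectedExcess [IsFiniteMeasure μ] (hX : ∀ i, Integrable (X i) μ) :
    Continuous (expectedExcess X μ) :=
  continuous_finsetSum _ fun i _ => (lipschitzWith_integral_posPart_sub (hX i)).continuous

lemma exists_nonneg_isFixedPt_expectedExcess [IsFiniteMeasure μ]
    (hX : ∀ i, Integrable (X i) μ) : ∃ θ, 0 ≤ θ ∧ Function.IsFixedPt (expectedExcess X μ) θ := by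
  have hmaps : MapsTo (expectedExcess X μ) (Icc 0 (expectedExcess X μ 0))
      (Icc 0 (expectedExcess X μ 0)) := fun θ hθ =>
    ⟨expectedExcess_nonneg X μ θ, antitone_expectedExcess hX hθ.1⟩
  obtain ⟨θ, hθ, hfix⟩ := exists_mem_Icc_isFixedPt_of_mapsTo
    (continuous_expectedExcess hX).continuousOn (expectedExcess_nonneg X μ 0) hmaps
  exact ⟨θ, hθ.1, hfix⟩

lemma ciSup_le_add_sum_posPart_sub [Nonempty ι] (x : ι → ℝ) (θ : ℝ) :
    ⨆ i, x i ≤ θ + ∑ i, (x i - θ)⁺ := by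
  refine ciSup_le fun i => sub_le_iff_le_add'.mp ?_
  exact (le_posPart _).trans <| Finset.single_le_sum (f := fun i => (x i - θ)⁺)
    (fun j _ => posPart_nonneg _) (Finset.mem_univ i)

lemma integral_iSup_le_add_expectedExcess [Nonempty ι] [IsProbabilityMeasure μ]
    (hX : ∀ i, Integrable (X i) μ) (θ : ℝ) :
    ∫ ω, ⨆ i, X i ω ∂μ ≤ θ + expectedExcess X μ θ := by
  have hexcess (i : ι) : Integrable (fun ω => (X i ω - θ)⁺) μ :=
    integrable_posPart_sub_const (hX i) θ
  have hsum : Integrable (fun ω => ∑ i, (X i ω - θ)⁺) μ :=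
    integrable_finsetSum _ fun i _ => hexcess i
  calc ∫ ω, ⨆ i, X i ω ∂μ
      ≤ ∫ ω, (θ + ∑ i, (X i ω - θ)⁺) ∂μ :=
        integral_mono (integrable_iSup_of_forall_integrable hX) ((integrable_const θ).add hsum)
          fun ω => ciSup_le_add_sum_posPart_sub (fun i => X i ω) θ
    _ = θ + expectedExcess X μ θ := by
        rw [integral_add (integrable_const θ) hsum, integral_finsetSum _ fun i _ => hexcess i]
        simp [expectedExcess]

end Excess

section ThresholdReward

open Set

variable {Ω ι : Type*} {X : ι → Ω → ℝ} {θ : ℝ}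

/-- The excess of `X i` over `θ` on the event that no other `X j` reaches `θ`, and `0` elsewhere:
the part of the reward beyond `θ` that an adversarial choice of eligible index cannot withhold. -/
noncomputable def exclusiveExcess (X : ι → Ω → ℝ) (θ : ℝ) (i : ι) : Ω → ℝ :=
  (⋂ j ≠ i, X j ⁻¹' Iio θ).indicator fun ω => (X i ω - θ)⁺

lemma exclusiveExcess_of_lt {i : ι} {ω : Ω} (hi : X i ω < θ) : exclusiveExcess X θ i ω = 0 := by
  have : (X i ω - θ)⁺ = 0 := posPart_eq_zero.mpr (by linarith)
  simp [exclusiveExcess, this]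

lemma exclusiveExcess_of_le_of_ne {i k : ι} {ω : Ω} (hk : θ ≤ X k ω) (hki : k ≠ i) :
    exclusiveExcess X θ i ω = 0 :=
  indicator_of_notMem (fun h => (mem_iInter₂.mp h k hki : X k ω < θ).not_ge hk) _

lemma sum_exclusiveExcess_le_sub [Fintype ι] {k : ι} {ω : Ω} (hk : θ ≤ X k ω) :
    ∑ i, exclusiveExcess X θ i ω ≤ X k ω - θ := by
  rw [Fintype.sum_eq_single k fun i hik => exclusiveExcess_of_le_of_ne hk hik.symm]
  calc exclusiveExcess X θ k ω
      ≤ (X k ω - θ)⁺ := indicator_le_self' (fun _ _ => posPart_nonneg _) ω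
    _ = X k ω - θ := posPart_of_nonneg (sub_nonneg.mpr hk)

lemma indicator_add_sum_exclusiveExcess_le [Fintype ι] {V : Ω → ℝ} {ω : Ω}
    (hnone : (∀ i, X i ω < θ) → 0 ≤ V ω)
    (hsome : (∃ i, θ ≤ X i ω) → ∃ k, θ ≤ X k ω ∧ X k ω ≤ V ω) :
    (⋂ i, X i ⁻¹' Iio θ)ᶜ.indicator (fun _ => θ) ω + ∑ i, exclusiveExcess X θ i ω ≤ V ω := by
  by_cases hω : ∀ i, X i ω < θ
  · have hmem : ω ∉ (⋂ i, X i ⁻¹' Iio θ)ᶜ := not_not_intro (mem_iInter.mpr hω)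
    rw [indicator_of_notMem hmem, Finset.sum_eq_zero fun i _ => exclusiveExcess_of_lt (hω i),
      add_zero]
    exact hnone hω
  · have hmem : ω ∈ (⋂ i, X i ⁻¹' Iio θ)ᶜ := fun h => hω fun i => mem_iInter.mp h i
    push Not at hω
    obtain ⟨k, hk, hkV⟩ := hsome hω
    rw [indicator_of_mem hmem]
    linarith [sum_exclusiveExcess_le_sub hk]

variable [MeasurableSpace Ω] {μ : Measure Ω}

lemma integrable_exclusiveExcess [Countable ι] [IsFiniteMeasure μ]
    (hmeas : ∀ i, Measurable (X i)) {i : ι} (hX : Integrable (X i) μ) :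
    Integrable (exclusiveExcess X θ i) μ :=
  (integrable_posPart_sub_const hX θ).indicator <|
    .iInter fun j => .iInter fun _ => hmeas j measurableSet_Iio

lemma measureReal_mul_integral_posPart_le_integral_exclusiveExcess [Countable ι]
    (hindep : iIndepFun X μ) (hmeas : ∀ i, Measurable (X i)) (i : ι) :
    μ.real (⋂ j, X j ⁻¹' Iio θ) * ∫ ω, (X i ω - θ)⁺ ∂μ ≤ ∫ ω, exclusiveExcess X θ i ω ∂μ := by
  have := hindep.isProbabilityMeasure
  have hothers : MeasurableSet (⋂ j ≠ i, X j ⁻¹' Iio θ) :=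
    .iInter fun j => .iInter fun _ => hmeas j measurableSet_Iio
  have hsubset : ⋂ j, X j ⁻¹' Iio θ ⊆ ⋂ j ≠ i, X j ⁻¹' Iio θ :=
    iInter_mono fun _ => subset_iInter fun _ => subset_rfl
  calc μ.real (⋂ j, X j ⁻¹' Iio θ) * ∫ ω, (X i ω - θ)⁺ ∂μ
      ≤ μ.real (⋂ j ≠ i, X j ⁻¹' Iio θ) * ∫ ω, (X i ω - θ)⁺ ∂μ :=
        mul_le_mul_of_nonneg_right (measureReal_mono hsubset)
          (integral_nonneg fun _ => posPart_nonneg _)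
    _ = ∫ ω in ⋂ j ≠ i, X j ⁻¹' Iio θ, (X i ω - θ)⁺ ∂μ :=
        (setIntegral_iInter_ne_preimage_eq_smul hindep hmeas (fun _ => measurableSet_Iio) i
          (φ := fun y => (y - θ)⁺)
          (continuous_posPart.comp (continuous_sub_right θ)).aestronglyMeasurable).symm
    _ = ∫ ω, exclusiveExcess X θ i ω ∂μ := (integral_indicator hothers).symm

lemma threshold_add_expectedExcess_le_integral [Fintype ι]
    (hindep : iIndepFun X μ) (hmeas : ∀ i, Measurable (X i)) (hX : ∀ i, Integrable (X i) μ)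
    {V : Ω → ℝ} (hV : Integrable V μ) (hnone : ∀ ω, (∀ i, X i ω < θ) → 0 ≤ V ω)
    (hsome : ∀ ω, (∃ i, θ ≤ X i ω) → ∃ k, θ ≤ X k ω ∧ X k ω ≤ V ω) :
    (1 - μ.real (⋂ i, X i ⁻¹' Iio θ)) * θ
      + μ.real (⋂ i, X i ⁻¹' Iio θ) * expectedExcess X μ θ ≤ ∫ ω, V ω ∂μ := by
  have := hindep.isProbabilityMeasure
  set below : Set Ω := ⋂ i, X i ⁻¹' Iio θ
  have hbelow : MeasurableSet below := .iInter fun i => hmeas i measurableSet_Iio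
  have hθ : Integrable (belowᶜ.indicator fun _ => θ) μ :=
    (integrable_const θ).indicator hbelow.compl
  have hexcess (i : ι) : Integrable (exclusiveExcess X θ i) μ :=
    integrable_exclusiveExcess hmeas (hX i)
  have hsum : Integrable (fun ω => ∑ i, exclusiveExcess X θ i ω) μ :=
    integrable_finsetSum _ fun i _ => hexcess i
  calc (1 - μ.real below) * θ + μ.real below * expectedExcess X μ θ
      = μ.real belowᶜ * θ + ∑ i, μ.real below * ∫ ω, (X i ω - θ)⁺ ∂μ := by
        rw [probReal_compl_eq_one_sub hbelow, expectedExcess, Finset.mul_sum]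
    _ ≤ μ.real belowᶜ * θ + ∑ i, ∫ ω, exclusiveExcess X θ i ω ∂μ := by
        gcongr with i
        exact measureReal_mul_integral_posPart_le_integral_exclusiveExcess hindep hmeas i
    _ = ∫ ω, (belowᶜ.indicator (fun _ => θ) ω + ∑ i, exclusiveExcess X θ i ω) ∂μ := by
        rw [integral_add hθ hsum, integral_indicator_const θ hbelow.compl, smul_eq_mul,
          integral_finsetSum _ fun i _ => hexcess i]
    _ ≤ ∫ ω, V ω ∂μ :=
        integral_mono (hθ.add hsum) hV fun ω =>
          indicator_add_sum_exclusiveExcess_le (hnone ω) (hsome ω)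

lemma half_integral_iSup_le_integral_of_isFixedPt [Fintype ι] [Nonempty ι]
    (hindep : iIndepFun X μ) (hmeas : ∀ i, Measurable (X i)) (hX : ∀ i, Integrable (X i) μ)
    (hfix : Function.IsFixedPt (expectedExcess X μ) θ)
    {V : Ω → ℝ} (hV : Integrable V μ) (hnone : ∀ ω, (∀ i, X i ω < θ) → 0 ≤ V ω)
    (hsome : ∀ ω, (∃ i, θ ≤ X i ω) → ∃ k, θ ≤ X k ω ∧ X k ω ≤ V ω) :
    (1 / 2) * ∫ ω, ⨆ i, X i ω ∂μ ≤ ∫ ω, V ω ∂μ := by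
  have := hindep.isProbabilityMeasure
  have hmax := integral_iSup_le_add_expectedExcess hX θ
  have hreward := threshold_add_expectedExcess_le_integral hindep hmeas hX hV hnone hsome
  rw [hfix.eq] at hmax hreward
  linarith

end ThresholdReward

theorem delegation_half_threshold_general {Ω ι : Type*} [MeasurableSpace Ω] {μ : Measure Ω}
    [Finite ι] [Nonempty ι] {X : ι → Ω → ℝ} (hindep : iIndepFun X μ)
    (hmeas : ∀ i, Measurable (X i)) (hX : ∀ i, Integrable (X i) μ) :
    ∃ θ : ℝ, 0 ≤ θ ∧ ∀ proposal : Ω → Option ι,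
      (∀ ω i, proposal ω = some i → θ ≤ X i ω) →
      (∀ ω, (∃ i, θ ≤ X i ω) → (proposal ω).isSome) →
      Integrable (fun ω => ((proposal ω).map fun i => X i ω).getD 0) μ →
      (1 / 2) * (∫ ω, (⨆ i, X i ω) ∂μ) ≤ ∫ ω, ((proposal ω).map fun i => X i ω).getD 0 ∂μ := by
  have := hindep.isProbabilityMeasure
  have := Fintype.ofFinite ι
  obtain ⟨θ, hθ, hfix⟩ := exists_nonneg_isFixedPt_expectedExcess hX
  refine ⟨θ, hθ, fun proposal heligible hproposes hreward =>
    half_integral_iSup_le_integral_of_isFixedPt hindep hmeas hX hfix hreward ?_ ?_⟩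
  · intro ω hbelow
    have hnone : proposal ω = none :=
      Option.eq_none_iff_forall_ne_some.mpr fun i hi => (hbelow i).not_ge (heligible ω i hi)
    simp [hnone]
  · intro ω hexists
    obtain ⟨k, hk⟩ := Option.isSome_iff_exists.mp (hproposes ω hexists)
    exact ⟨k, heligible ω k hk, by simp [hk]⟩

/-- In the distributional model of delegated search, the agent draws
`n` i.i.d. samples `(x_1,y_1),…,(x_n,y_n)` from a joint distribution on `[0,∞)×[0,∞)`
(`x_i` is the principal's utility and `y_i` the agent's); assume `E[max_i x_i]` is
finite.  There exist a threshold `θ ≥ 0` and a choice of weak or strict comparison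
such that the single-proposal mechanism with eligible set `R = {(x,y) : x ≥ θ}`
(resp. `R = {(x,y) : x > θ}`) guarantees the principal expected utility at least
`(1/2)·E[max_i x_i]`, no matter which eligible sample the agent proposes whenever at
least one eligible sample exists (the principal receives the `x`-value of the
accepted proposal, and `0` when no sample is eligible). -/
theorem delegation_half_threshold {Ω : Type*} [MeasurableSpace Ω]
    (μ : Measure Ω) [IsProbabilityMeasure μ]
    (n : ℕ) (hn : 0 < n) (s : Fin n → Ω → ℝ × ℝ)
    (hmeas : ∀ i, Measurable (s i))
    (hnonneg : ∀ i ω, 0 ≤ (s i ω).1 ∧ 0 ≤ (s i ω).2)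
    (hindep : iIndepFun s μ)
    (hident : ∀ i, μ.map (s i) = μ.map (s ⟨0, hn⟩))
    (hint_max : Integrable (fun ω => ⨆ i, (s i ω).1) μ) :
    ∃ θ : ℝ, 0 ≤ θ ∧ ∃ R : Set (ℝ × ℝ),
      (R = {p | θ ≤ p.1} ∨ R = {p | θ < p.1}) ∧
      ∀ proposal : Ω → Option (Fin n),
        (∀ ω i, proposal ω = some i → s i ω ∈ R) →
        (∀ ω, (∃ i, s i ω ∈ R) → (proposal ω).isSome) →
        Integrable (fun ω => ((proposal ω).map fun i => (s i ω).1).getD 0) μ →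
        (1 / 2) * (∫ ω, (⨆ i, (s i ω).1) ∂μ)
          ≤ ∫ ω, ((proposal ω).map fun i => (s i ω).1).getD 0 ∂μ := by
  have : Nonempty (Fin n) := ⟨⟨0, hn⟩⟩
  have hfst (i : Fin n) : Measurable fun ω => (s i ω).1 := (hmeas i).fst
  obtain ⟨θ, hθ, hhalf⟩ := delegation_half_threshold_general
    (hindep.comp (fun _ => Prod.fst) fun _ => measurable_fst) hfst <|
    integrable_of_integrable_iSup_of_nonneg (fun i => (hfst i).aestronglyMeasurable)
      (fun i ω => (hnonneg i ω).1) hint_max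
  exact ⟨θ, hθ, _, .inl rfl, hhalf⟩
end

section
/- Let x_1,…,x_n be independent nonnegative integrable random variables and x_* = max_{1≤i≤n} x_i. Then there exists a threshold θ such that at least one of the two threshold stopping rules at θ — the weak rule selecting the first x_i with x_i ≥ θ, and the strict rule selecting the first x_i with x_i > θ (each yielding value 0 if no index qualifies) — has expected selected value at least (1/2)·E[x_*]. -/
open MeasureTheory ProbabilityTheory

/-- The value obtained by a threshold stopping rule with eligible set `X ⊆ ℝ` applied to
the finite sequence `x 0, x 1, …, x (n-1)`: it selects the first entry lying in `X`,
and receives `0` if no entry lies in `X`. -/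
noncomputable def thresholdStopValue {n : ℕ} (x : Fin n → ℝ) (X : Set ℝ) : ℝ := by
  classical
  exact match Fin.find? (fun i => decide (x i ∈ X)) with
    | some i => x i
    | none => 0

/-!
Fix a threshold `θ` and let `q` be the probability that no variable is eligible. A rule at `θ`
earns `θ` whenever it stops, plus the excess `(xᵢ - θ)⁺` of the selected variable. Whether index
`i` is reached depends only on the earlier variables, so the excess at `i` is earned on an
event that is independent of `xᵢ` and has probability at least `q`. Since
`x_* ≤ θ + ∑ᵢ (xᵢ - θ)⁺`, the rule earns in expectation at least `(1 - q) θ + q (𝔼 x_* - θ)`, and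
for `θ = 𝔼 x_* / 2` this is `𝔼 x_* / 2`, whatever `q` is.
-/

lemma exists_first_mem {ι α : Type*} [LT ι] [WellFoundedLT ι] {x : ι → α} {X : Set α}
    (hx : ∃ i, x i ∈ X) : ∃ i, x i ∈ X ∧ ∀ j < i, x j ∉ X := by
  obtain ⟨i, hi, hmin⟩ := wellFounded_lt.has_min {i | x i ∈ X} hx
  exact ⟨i, hi, fun j hji hj => hmin j hj hji⟩

section Pathwise

variable {n : ℕ} {x : Fin n → ℝ} {X : Set ℝ}

lemma thresholdStopValue_eq_zero (hx : ∀ i, x i ∉ X) : thresholdStopValue x X = 0 := by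
  classical
  have hfind : Fin.find? (fun i => decide (x i ∈ X)) = none :=
    Fin.find?_eq_none_iff.mpr fun i => decide_eq_false (hx i)
  simp only [thresholdStopValue, hfind]

lemma thresholdStopValue_eq_of_first {i : Fin n} (hi : x i ∈ X) (hlt : ∀ j < i, x j ∉ X) :
    thresholdStopValue x X = x i := by
  classical
  have hfind : Fin.find? (fun j => decide (x j ∈ X)) = some i :=
    Fin.find?_eq_some_iff.mpr ⟨decide_eq_true hi, fun j hj => by simpa using hlt j hj⟩
  simp only [thresholdStopValue, hfind]

end Pathwise

lemma ciSup_le_add_sum_max_sub {ι : Type*} [Fintype ι] [Nonempty ι] (y : ι → ℝ) (θ : ℝ) :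
    ⨆ i, y i ≤ θ + ∑ i, max (y i - θ) 0 := by
  refine ciSup_le fun i => ?_
  calc y i ≤ θ + max (y i - θ) 0 := by linarith [le_max_left (y i - θ) 0]
    _ ≤ θ + ∑ i, max (y i - θ) 0 := by
      gcongr
      exact Finset.single_le_sum (f := fun i => max (y i - θ) 0) (fun _ _ => le_max_right _ _)
        (Finset.mem_univ i)

lemma integrable_ciSup {Ω ι : Type*} [MeasurableSpace Ω] {μ : Measure Ω} [Finite ι] [Nonempty ι]
    {f : ι → Ω → ℝ} (hf : ∀ i, Integrable (f i) μ) : Integrable (fun ω => ⨆ i, f i ω) μ := by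
  cases nonempty_fintype ι
  have hsup : Integrable (Finset.univ.sup' Finset.univ_nonempty f) μ :=
    Finset.sup'_induction (p := (Integrable · μ)) _ _ (fun _ hg _ hh => hg.sup hh) fun i _ => hf i
  convert hsup using 1
  ext ω
  rw [Finset.sup'_apply, Finset.sup'_univ_eq_ciSup]

lemma integral_ciSup_le_add_sum_integral_max_sub {Ω ι : Type*} [MeasurableSpace Ω] {μ : Measure Ω}
    [IsProbabilityMeasure μ] [Fintype ι] [Nonempty ι] {x : ι → Ω → ℝ}
    (hint : ∀ i, Integrable (x i) μ) (θ : ℝ) :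
    ∫ ω, ⨆ i, x i ω ∂μ ≤ θ + ∑ i, ∫ ω, max (x i ω - θ) 0 ∂μ := by
  have hexcess : ∀ i, Integrable (fun ω => max (x i ω - θ) 0) μ := fun i =>
    ((hint i).sub (integrable_const θ)).pos_part
  calc ∫ ω, ⨆ i, x i ω ∂μ ≤ ∫ ω, (θ + ∑ i, max (x i ω - θ) 0) ∂μ :=
        integral_mono (integrable_ciSup hint)
          ((integrable_const θ).add (integrable_finsetSum _ fun i _ => hexcess i))
          fun ω => ciSup_le_add_sum_max_sub (fun i => x i ω) θ
    _ = θ + ∑ i, ∫ ω, max (x i ω - θ) 0 ∂μ := by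
        rw [integral_add (integrable_const θ) (integrable_finsetSum _ fun i _ => hexcess i),
          integral_finsetSum _ fun i _ => hexcess i]
        simp

lemma measurableSet_of_Ioi_subset_of_subset_Ici {θ : ℝ} {X : Set ℝ} (hIoi : Set.Ioi θ ⊆ X)
    (hIci : X ⊆ Set.Ici θ) : MeasurableSet X := by
  rcases Set.mem_Ici_Ioi_of_subset_of_subset hIoi hIci with rfl | rfl
  · exact measurableSet_Ici
  · exact measurableSet_Ioi

/-- The event that none of the variables `x j` with `j ∈ s` is eligible, that is, lies in `X`.
For `s = Set.Iio i` this is the event that a stopping rule with eligible set `X` reaches index `i`,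
and for `s = Set.univ` the event that it never stops. -/
def noneEligible {Ω ι α : Type*} (x : ι → Ω → α) (X : Set α) (s : Set ι) : Set Ω :=
  {ω | ∀ j ∈ s, x j ω ∉ X}

section NoneEligible

variable {Ω ι α : Type*} {x : ι → Ω → α} {X : Set α}

lemma mem_noneEligible {s : Set ι} {ω : Ω} : ω ∈ noneEligible x X s ↔ ∀ j ∈ s, x j ω ∉ X :=
  Iff.rfl

lemma noneEligible_antitone : Antitone (noneEligible x X) :=
  fun _ _ hst _ hω j hj => hω j (hst hj)

variable [MeasurableSpace Ω] {μ : Measure Ω} [MeasurableSpace α]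

lemma nullMeasurableSet_noneEligible (hx : ∀ i, AEMeasurable (x i) μ) (hX : MeasurableSet X)
    {s : Set ι} (hs : s.Countable) : NullMeasurableSet (noneEligible x X s) μ := by
  have hinter : noneEligible x X s = ⋂ j ∈ s, x j ⁻¹' Xᶜ := by
    ext ω
    simp [mem_noneEligible]
  rw [hinter]
  exact .biInter hs fun j _ => (hx j).nullMeasurableSet_preimage hX.compl

lemma setIntegral_noneEligible (hx : ∀ i, AEMeasurable (x i) μ) (hindep : iIndepFun x μ)
    (hX : MeasurableSet X) {s : Set ι} (hs : s.Finite) {i : ι} (hi : i ∉ s) {f : α → ℝ}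
    (hf : Measurable f) :
    ∫ ω in noneEligible x X s, f (x i ω) ∂μ = μ.real (noneEligible x X s) * ∫ ω, f (x i ω) ∂μ := by
  lift s to Finset ι using hs
  have hA : NullMeasurableSet (noneEligible x X s) μ :=
    nullMeasurableSet_noneEligible hx hX s.countable_toSet
  have hpre : noneEligible x X s = (fun ω (j : s) => x j ω) ⁻¹' Set.univ.pi fun _ => Xᶜ := by
    ext ω
    simp [mem_noneEligible]
  have hind : IndepFun ((noneEligible x X s).indicator (1 : Ω → ℝ)) (fun ω => f (x i ω)) μ := by
    rw [hpre]
    exact (hindep.indepFun_finset₀ s {i} (by simpa using hi) hx).comp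
      (measurable_one.indicator (.univ_pi fun _ => hX.compl))
      (hf.comp (measurable_pi_apply (⟨i, Finset.mem_singleton_self i⟩ : ({i} : Finset ι))))
  calc ∫ ω in noneEligible x X s, f (x i ω) ∂μ
      = ∫ ω, (noneEligible x X s).indicator 1 ω * f (x i ω) ∂μ := by
        rw [← integral_indicator₀ hA]
        congr with ω
        by_cases hω : ω ∈ noneEligible x X s <;> simp [hω]
    _ = (∫ ω, (noneEligible x X s).indicator 1 ω ∂μ) * ∫ ω, f (x i ω) ∂μ :=
        hind.integral_fun_mul_eq_mul_integral (aestronglyMeasurable_one.indicator₀ hA)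
          (hf.comp_aemeasurable (hx i)).aestronglyMeasurable
    _ = μ.real (noneEligible x X s) * ∫ ω, f (x i ω) ∂μ := by
        simp [integral_indicator₀ hA]

end NoneEligible

section ExpectedValue

variable {Ω : Type*} {n : ℕ} {x : Fin n → Ω → ℝ} {X : Set ℝ} {θ : ℝ}

lemma thresholdStopValue_eq_indicator_add_sum (hIoi : Set.Ioi θ ⊆ X) (hIci : X ⊆ Set.Ici θ)
    (ω : Ω) :
    thresholdStopValue (fun i => x i ω) X =
      (noneEligible x X Set.univ)ᶜ.indicator (fun _ => θ) ω +
        ∑ i, (noneEligible x X (Set.Iio i)).indicator (fun ω => max (x i ω - θ) 0) ω := by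
  have hexcess : ∀ {j}, x j ω ∉ X → max (x j ω - θ) 0 = 0 := fun hj =>
    max_eq_right (sub_nonpos.mpr (not_lt.mp fun h => hj (hIoi h)))
  by_cases hω : ω ∈ noneEligible x X Set.univ
  · have hnone : ∀ i, x i ω ∉ X := fun i => hω i (Set.mem_univ i)
    have hexcess_eq : ∀ i,
        (noneEligible x X (Set.Iio i)).indicator (fun ω => max (x i ω - θ) 0) ω = 0 := fun i =>
      Set.indicator_apply_eq_zero.mpr fun _ => hexcess (hnone i)
    simp [thresholdStopValue_eq_zero hnone, hω, hexcess_eq]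
  · obtain ⟨i, hi, hlt⟩ : ∃ i, x i ω ∈ X ∧ ∀ j < i, x j ω ∉ X :=
      exists_first_mem (by simpa [mem_noneEligible] using hω)
    have hreach : ω ∈ noneEligible x X (Set.Iio i) := hlt
    have hsum : ∑ j, (noneEligible x X (Set.Iio j)).indicator (fun ω => max (x j ω - θ) 0) ω =
        x i ω - θ := by
      rw [Finset.sum_eq_single_of_mem i (Finset.mem_univ i), Set.indicator_of_mem hreach,
        max_eq_left (sub_nonneg.mpr (hIci hi))]
      intro j _ hji
      rcases hji.lt_or_gt with hji | hij
      · exact Set.indicator_apply_eq_zero.mpr fun _ => hexcess (hlt j hji)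
      · exact Set.indicator_of_notMem (fun hj => mem_noneEligible.mp hj i hij hi) _
    rw [thresholdStopValue_eq_of_first hi hlt, hsum, Set.indicator_of_mem hω]
    ring

variable [MeasurableSpace Ω] {μ : Measure Ω} [IsProbabilityMeasure μ]

lemma integral_thresholdStopValue (hint : ∀ i, Integrable (x i) μ) (hindep : iIndepFun x μ)
    (hIoi : Set.Ioi θ ⊆ X) (hIci : X ⊆ Set.Ici θ) :
    ∫ ω, thresholdStopValue (fun i => x i ω) X ∂μ =
      (1 - μ.real (noneEligible x X Set.univ)) * θ +
        ∑ i, μ.real (noneEligible x X (Set.Iio i)) * ∫ ω, max (x i ω - θ) 0 ∂μ := by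
  have hx : ∀ i, AEMeasurable (x i) μ := fun i => (hint i).aemeasurable
  have hX : MeasurableSet X := measurableSet_of_Ioi_subset_of_subset_Ici hIoi hIci
  have hnull : ∀ s, NullMeasurableSet (noneEligible x X s) μ := fun s =>
    nullMeasurableSet_noneEligible hx hX s.to_countable
  have hexcess : ∀ i, Integrable
      ((noneEligible x X (Set.Iio i)).indicator fun ω => max (x i ω - θ) 0) μ := fun i =>
    ((hint i).sub (integrable_const θ)).pos_part.indicator₀ (hnull _)
  simp_rw [thresholdStopValue_eq_indicator_add_sum hIoi hIci]
  rw [integral_add ((integrable_const θ).indicator₀ (hnull _).compl)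
      (integrable_finsetSum _ fun i _ => hexcess i),
    integral_finsetSum _ fun i _ => hexcess i, integral_indicator₀ (hnull _).compl,
    setIntegral_const, probReal_compl_eq_one_sub₀ (hnull _), smul_eq_mul]
  congr! 2 with i
  rw [integral_indicator₀ (hnull _)]
  exact setIntegral_noneEligible (f := fun y => max (y - θ) 0) hx hindep hX (Set.toFinite _)
    Set.self_notMem_Iio (by fun_prop)

lemma one_sub_mul_add_mul_le_integral_thresholdStopValue [NeZero n] (hint : ∀ i, Integrable (x i) μ)
    (hindep : iIndepFun x μ) (hIoi : Set.Ioi θ ⊆ X) (hIci : X ⊆ Set.Ici θ) :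
    (1 - μ.real (noneEligible x X Set.univ)) * θ +
        μ.real (noneEligible x X Set.univ) * (∫ ω, ⨆ i, x i ω ∂μ - θ) ≤
      ∫ ω, thresholdStopValue (fun i => x i ω) X ∂μ := by
  rw [integral_thresholdStopValue hint hindep hIoi hIci]
  gcongr
  calc μ.real (noneEligible x X Set.univ) * (∫ ω, ⨆ i, x i ω ∂μ - θ)
      ≤ μ.real (noneEligible x X Set.univ) * ∑ i, ∫ ω, max (x i ω - θ) 0 ∂μ := by
        gcongr
        linarith [integral_ciSup_le_add_sum_integral_max_sub hint θ]
    _ = ∑ i, μ.real (noneEligible x X Set.univ) * ∫ ω, max (x i ω - θ) 0 ∂μ :=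
        Finset.mul_sum ..
    _ ≤ ∑ i, μ.real (noneEligible x X (Set.Iio i)) * ∫ ω, max (x i ω - θ) 0 ∂μ := by
        gcongr with i
        · exact measure_ne_top _ _
        · exact noneEligible_antitone (Set.subset_univ _)

/-- The two inclusions leave only `X = Set.Ici θ` and `X = Set.Ioi θ`, the weak and the strict
rule. -/
theorem samuel_cahn_prophet_general [NeZero n] (hint : ∀ i, Integrable (x i) μ)
    (hindep : iIndepFun x μ) (hθ : θ = (1 / 2) * ∫ ω, ⨆ i, x i ω ∂μ) (hIoi : Set.Ioi θ ⊆ X)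
    (hIci : X ⊆ Set.Ici θ) :
    (1 / 2) * ∫ ω, ⨆ i, x i ω ∂μ ≤ ∫ ω, thresholdStopValue (fun i => x i ω) X ∂μ := by
  have hbound :=
    one_sub_mul_add_mul_le_integral_thresholdStopValue hint hindep hIoi hIci
  have hhalf : ∫ ω, ⨆ i, x i ω ∂μ = 2 * θ := by linarith
  rw [hhalf] at hbound ⊢
  linarith

end ExpectedValue

/-- Samuel-Cahn prophet inequality, factor `1/2`, for threshold
stopping rules.  Let `x_1,…,x_n` be independent nonnegative integrable random
variables and `x_* = max_i x_i`.  There exists a threshold `θ` such that at least one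
of the two threshold stopping rules at `θ` — the weak rule stopping at the first
`x_i ≥ θ` and the strict rule stopping at the first `x_i > θ`, each receiving `0`
when no index qualifies — has expected selected value at least `(1/2)·E[x_*]`. -/
theorem samuel_cahn_prophet {Ω : Type*} [MeasurableSpace Ω]
    (μ : Measure Ω) [IsProbabilityMeasure μ]
    (n : ℕ) (hn : 0 < n) (x : Fin n → Ω → ℝ)
    (hmeas : ∀ i, Measurable (x i))
    (hnonneg : ∀ i ω, 0 ≤ x i ω)
    (hint : ∀ i, Integrable (x i) μ)
    (hindep : iIndepFun x μ) :
    ∃ θ : ℝ,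
      (1 / 2) * (∫ ω, (⨆ i, x i ω) ∂μ)
          ≤ ∫ ω, thresholdStopValue (fun i => x i ω) (Set.Ici θ) ∂μ ∨
      (1 / 2) * (∫ ω, (⨆ i, x i ω) ∂μ)
          ≤ ∫ ω, thresholdStopValue (fun i => x i ω) (Set.Ioi θ) ∂μ := by
  have : NeZero n := ⟨hn.ne'⟩
  exact ⟨_, .inl (samuel_cahn_prophet_general hint hindep rfl Set.Ioi_subset_Ici_self subset_rfl)⟩
end

section
/- Fix n ≥ 3 and let β_n, z, Z be as defined. Let (x_1,t_1),…,(x_n,t_n) be i.i.d. pairs where x_i is nonnegative with continuous (atomless) cumulative distribution function F and t_i is uniform on [0,1], independent of x_i. Consider the oblivious stopping rule that, among all indices i with 1 − F(x_i) < z(t_i)/n, selects the one with smallest t_i (receiving value 0 if no index qualifies), and let x_τ denote the selected value. Then E[x_τ] ≥ (1 − 6/n)·(1 + β_n)^{−1}·E[max_{1≤i≤n} x_i]. -/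
open MeasureTheory ProbabilityTheory

/-!
By the layer-cake formula it suffices to compare tails: for every `v`, with `a = 1 - F v` and
`y = n a`, the probability that the selected value exceeds `v` must be at least
`(1 - 6 / n) (1 + β)⁻¹ (1 - (1 - a) ^ n)`. An offer arriving at time `t` is accepted with
probability `q t = z t / n`, so conditioning on the first accepted offer gives exactly
`n ∫₀¹ min a (q t) (1 - ∫₀ᵗ q) ^ (n - 1) dt` for this probability. Write `Z t = ∫₀ᵗ z`. If
`(1 - Z t / n) ^ (n - 1)` is replaced by `exp (-Z t)`, the differential equation, integrated to
`exp (-Z t) = ((1 + z t) exp (-z t) + β) / (1 + β)`, allows the substitution `w = z t` and turns the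
integral into `(1 + β)⁻¹ ∫₀ⁿ min y w exp (-w) dw`, which is essentially `(1 + β)⁻¹ (1 - exp (-y))`.
Both this replacement and that of `(1 - y / n) ^ n` by `exp (-y)` cost only a factor
`1 - O(1 / n)`; the constant `6` comes from the bound `1 / 6 ≤ β`, which forces `Z t ≤ 2`.
-/

section Estimates

open Set Real

theorem exp_neg_mul_one_sub_sq_div_le {n : ℕ} {y : ℝ} (hy : |y| ≤ n) :
    exp (-y) * (1 - y ^ 2 / n) ≤ (1 - y / n) ^ n := by
  rcases n.eq_zero_or_pos with rfl | hn
  · obtain rfl : y = 0 := abs_nonpos_iff.1 (by simpa using hy)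
    simp
  obtain ⟨x, rfl⟩ : ∃ x, y = n * x := ⟨y / n, by field_simp⟩
  have hn₀ : (0 : ℝ) < n := mod_cast hn
  have hx : |x| ≤ 1 := by rw [abs_mul, Nat.abs_cast] at hy; nlinarith
  have hx_sq : x ^ 2 ≤ 1 := (sq_le_one_iff_abs_le_one x).2 hx
  have hfactor : exp (-x) * (1 - x ^ 2) ≤ 1 - x := by
    calc exp (-x) * (1 - x ^ 2) = exp (-x) * (x + 1) * (1 - x) := by ring
      _ ≤ exp (-x) * exp x * (1 - x) := by
          gcongr
          · linarith [le_of_abs_le hx]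
          · exact add_one_le_exp x
      _ = 1 - x := by rw [← exp_add, neg_add_cancel, exp_zero, one_mul]
  calc exp (-(n * x)) * (1 - (n * x) ^ 2 / n)
      = exp (-x) ^ n * (1 + n * -x ^ 2) := by
        rw [← exp_nat_mul]; field_simp; ring_nf
    _ ≤ exp (-x) ^ n * (1 + -x ^ 2) ^ n := by
        gcongr; exact one_add_mul_le_pow (by linarith) n
    _ = (exp (-x) * (1 - x ^ 2)) ^ n := by rw [mul_pow, sub_eq_add_neg]
    _ ≤ (1 - x) ^ n :=
        pow_le_pow_left₀ (mul_nonneg (exp_nonneg _) (by linarith)) hfactor n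
    _ = (1 - n * x / n) ^ n := by rw [mul_div_cancel_left₀ x hn₀.ne']

theorem sq_mul_exp_neg_le {y : ℝ} (hy : 0 ≤ y) : y ^ 2 * exp (-y) ≤ 1 - exp (-y) := by
  have hcubic : 1 + y + y ^ 2 / 2 + y ^ 3 / 6 ≤ exp y := by
    simpa [Finset.sum_range_succ, Nat.factorial] using sum_le_exp_of_nonneg hy 4
  have hsq : y ^ 2 + 1 ≤ exp y := by nlinarith [mul_nonneg hy (sq_nonneg (y - 3 / 2))]
  calc y ^ 2 * exp (-y) = (y ^ 2 + 1) * exp (-y) - exp (-y) := by ring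
    _ ≤ exp y * exp (-y) - exp (-y) := by gcongr
    _ = 1 - exp (-y) := by rw [← exp_add, add_neg_cancel, exp_zero]

theorem mul_mul_exp_neg_le {y N : ℝ} (hy : 0 ≤ y) (hyN : y ≤ N) :
    N * (y * exp (-N)) ≤ 1 - exp (-y) := by
  rcases hy.eq_or_lt with rfl | hy
  · simp
  have hN : 0 < N := hy.trans_le hyN
  -- `1 - exp (-y)` is concave in `y`, so on `[0, N]` it lies above its chord.
  have hchord : exp (-y) ≤ 1 - y / N + y / N * exp (-N) := by
    have := convexOn_exp.2 (mem_univ 0) (mem_univ (-N)) (sub_nonneg.2 ((div_le_one hN).2 hyN))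
      (by positivity : 0 ≤ y / N) (sub_add_cancel 1 _)
    simpa [hN.ne'] using this
  calc N * (y * exp (-N)) = y / N * (N ^ 2 * exp (-N)) := by field_simp
    _ ≤ y / N * (1 - exp (-N)) := by gcongr; exact sq_mul_exp_neg_le hN.le
    _ ≤ 1 - exp (-y) := by linarith

theorem ratio_mul_one_sub_pow_le {n : ℕ} {y : ℝ} (hn : (6 : ℝ) ≤ n) (hy : 0 ≤ y) (hyn : y ≤ n) :
    (1 - 6 / (n : ℝ)) * (1 - (1 - y / n) ^ n) ≤
      (1 - 4 / (n : ℝ)) * (1 - exp (-y) - y * exp (-n)) := by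
  have hn₀ : (0 : ℝ) < n := by linarith
  set p := 1 - exp (-y)
  have hp : 0 ≤ p := sub_nonneg.2 (exp_le_one_iff.2 (neg_nonpos.2 hy))
  have hmax : 1 - (1 - y / n) ^ n ≤ (1 + 1 / n) * p := by
    calc 1 - (1 - y / n) ^ n ≤ 1 - exp (-y) * (1 - y ^ 2 / n) := by
          gcongr; exact exp_neg_mul_one_sub_sq_div_le (by rwa [abs_of_nonneg hy])
      _ = p + y ^ 2 * exp (-y) / n := by ring
      _ ≤ p + p / n := by gcongr; exact sq_mul_exp_neg_le hy
      _ = (1 + 1 / n) * p := by ring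
  have htail : (1 - 1 / n) * p ≤ p - y * exp (-n) := by
    have : y * exp (-n) ≤ p / n := by
      rw [le_div_iff₀' hn₀]; exact mul_mul_exp_neg_le hy hyn
    linarith [one_div_mul_eq_div (n : ℝ) p]
  have hsix : 0 ≤ 1 - 6 / (n : ℝ) := sub_nonneg.2 ((div_le_one hn₀).2 hn)
  have hfour : 0 ≤ 1 - 4 / (n : ℝ) := sub_nonneg.2 ((div_le_one hn₀).2 (by linarith))
  calc (1 - 6 / (n : ℝ)) * (1 - (1 - y / n) ^ n)
      ≤ (1 - 6 / (n : ℝ)) * ((1 + 1 / n) * p) := by gcongr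
    _ = (1 - 4 / (n : ℝ)) * ((1 - 1 / n) * p) - 10 / n ^ 2 * p := by field_simp; ring
    _ ≤ (1 - 4 / (n : ℝ)) * ((1 - 1 / n) * p) := sub_le_self _ (by positivity)
    _ ≤ (1 - 4 / (n : ℝ)) * (p - y * exp (-n)) := by gcongr

theorem integral_min_mul_exp_neg {y N : ℝ} (hy : 0 ≤ y) (hyN : y ≤ N) :
    ∫ w in (0 : ℝ)..N, min y w * exp (-w) = 1 - exp (-y) - y * exp (-N) := by
  have hcont : Continuous fun w ↦ min y w * exp (-w) := by fun_prop
  have hexp (w : ℝ) : HasDerivAt (fun w ↦ exp (-w)) (-exp (-w)) w := by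
    simpa using (hasDerivAt_neg w).exp
  have hbelow : ∫ w in (0 : ℝ)..y, min y w * exp (-w) = 1 - (1 + y) * exp (-y) := by
    rw [intervalIntegral.integral_eq_sub_of_hasDerivAt (f := fun w ↦ -((1 + w) * exp (-w)))
      (fun w hw ↦ ?_) (hcont.intervalIntegrable _ _)]
    · simp only [add_zero, neg_zero, exp_zero]; ring
    · rw [uIcc_of_le hy] at hw
      refine (((hasDerivAt_id w).const_add 1).mul (hexp w)).neg.congr_deriv ?_
      simp only [min_eq_right hw.2, id]; ring
  have habove : ∫ w in y..N, min y w * exp (-w) = y * (exp (-y) - exp (-N)) := by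
    rw [intervalIntegral.integral_eq_sub_of_hasDerivAt (f := fun w ↦ -(y * exp (-w)))
      (fun w hw ↦ ?_) (hcont.intervalIntegrable _ _)]
    · ring
    · rw [uIcc_of_le hyN] at hw
      exact ((hexp w).const_mul y).neg.congr_deriv (by rw [min_eq_left hw.1]; ring)
  rw [← intervalIntegral.integral_add_adjacent_intervals (b := y)
    (hcont.intervalIntegrable _ _) (hcont.intervalIntegrable _ _), hbelow, habove]
  ring

end Estimates

section ThresholdCurve

open Set Real

theorem intervalIntegrable_inv_one_add_add_mul_exp {β a b : ℝ} (hβ : 0 ≤ β) (ha : 0 ≤ a)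
    (hb : 0 ≤ b) :
    IntervalIntegrable (fun v ↦ (1 + v + β * exp v)⁻¹) volume a b := by
  refine ContinuousOn.intervalIntegrable (ContinuousOn.inv₀ (by fun_prop) fun v hv ↦ ?_)
  have : 0 ≤ v := (le_min ha hb).trans hv.1
  positivity

theorem le_integral_inv_one_add_add_mul_exp {β N : ℝ} (hβ : 0 ≤ β) (hN : 0 ≤ N) :
    (2 - β) * (1 - exp (-N)) - 3 / 4 ≤ ∫ v in (0 : ℝ)..N, (1 + v + β * exp v)⁻¹ := by
  -- `D⁻¹ ≥ 2 c - c ^ 2 D` for every `c`; the choice `c = exp (-v)` integrates in closed form.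
  have hlinearize : ∀ v ∈ Icc 0 N,
      (2 - β) * exp (-v) - (1 + v) * exp (-v) ^ 2 ≤ (1 + v + β * exp v)⁻¹ := by
    intro v hv
    have hv₀ := hv.1
    have hsq : 0 ≤ (1 - exp (-v) * (1 + v + β * exp v)) ^ 2 / (1 + v + β * exp v) := by
      positivity
    have hexpand : (1 - exp (-v) * (1 + v + β * exp v)) ^ 2 / (1 + v + β * exp v) =
        (1 + v + β * exp v)⁻¹ - ((2 - β) * exp (-v) - (1 + v) * exp (-v) ^ 2) := by
      have : 1 + v + β * exp v ≠ 0 := by positivity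
      rw [exp_neg]
      field_simp
      ring
    linarith
  have hexp (v : ℝ) : HasDerivAt (fun v ↦ exp (-v)) (-exp (-v)) v := by
    simpa using (hasDerivAt_neg v).exp
  have hprimitive (v : ℝ) : HasDerivAt
      (fun v ↦ (3 / 4 + v / 2) * exp (-v) ^ 2 - (2 - β) * exp (-v))
      ((2 - β) * exp (-v) - (1 + v) * exp (-v) ^ 2) v := by
    refine (((((hasDerivAt_id v).div_const 2).const_add (3 / 4)).mul ((hexp v).pow 2)).sub
      ((hexp v).const_mul (2 - β))).congr_deriv ?_
    simp only [id, Pi.pow_apply]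
    ring
  have hcont : Continuous fun v ↦ (2 - β) * exp (-v) - (1 + v) * exp (-v) ^ 2 := by fun_prop
  calc (2 - β) * (1 - exp (-N)) - 3 / 4
      ≤ (2 - β) * (1 - exp (-N)) - 3 / 4 + (3 / 4 + N / 2) * exp (-N) ^ 2 :=
        le_add_of_nonneg_right (by positivity)
    _ = ∫ v in (0 : ℝ)..N, ((2 - β) * exp (-v) - (1 + v) * exp (-v) ^ 2) := by
        rw [intervalIntegral.integral_eq_sub_of_hasDerivAt (fun v _ ↦ hprimitive v)
          (hcont.intervalIntegrable _ _)]
        simp only [neg_zero, exp_zero]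
        ring
    _ ≤ ∫ v in (0 : ℝ)..N, (1 + v + β * exp v)⁻¹ :=
        intervalIntegral.integral_mono_on hN (hcont.intervalIntegrable _ _)
          (intervalIntegrable_inv_one_add_add_mul_exp hβ le_rfl hN) hlinearize

theorem one_sixth_le_of_integral_inv_le_one {β N : ℝ} (hβ : 0 ≤ β) (hN : 6 ≤ N)
    (h : ∫ v in (0 : ℝ)..N, (1 + v + β * exp v)⁻¹ ≤ 1) : 1 / 6 ≤ β := by
  have hexp : exp (-N) ≤ 1 / 24 := by
    rw [exp_neg, one_div]
    refine inv_anti₀ (by norm_num) ?_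
    nlinarith [quadratic_le_exp_of_nonneg (show 0 ≤ N by linarith)]
  nlinarith [le_integral_inv_one_add_add_mul_exp hβ (show 0 ≤ N by linarith),
    mul_nonneg hβ (exp_nonneg (-N))]

/-- `z` solves `z' = 1 + z + β e ^ z` on `[0, 1]` and increases from `z 0 = 0` to `z 1 = N`. An
offer arriving at time `t` is accepted when its tail probability is below `z t / N`. -/
structure IsThresholdCurve (β N : ℝ) (z : ℝ → ℝ) : Prop where
  zero : z 0 = 0
  one : z 1 = N
  mem_Icc : ∀ t ∈ Icc (0 : ℝ) 1, z t ∈ Icc 0 N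
  hasDerivAt : ∀ t ∈ Icc (0 : ℝ) 1, HasDerivAt z (1 + z t + β * exp (z t)) t

namespace IsThresholdCurve

variable {β N : ℝ} {z : ℝ → ℝ}

theorem continuousOn (hz : IsThresholdCurve β N z) : ContinuousOn z (Icc 0 1) :=
  fun t ht ↦ (hz.hasDerivAt t ht).continuousAt.continuousWithinAt

theorem intervalIntegrable (hz : IsThresholdCurve β N z) {t : ℝ} (ht : t ∈ Icc (0 : ℝ) 1) :
    IntervalIntegrable z volume 0 t :=
  (hz.continuousOn.mono (uIcc_of_le ht.1 ▸ Icc_subset_Icc_right ht.2)).intervalIntegrable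

-- With `ψ w = (1 + w) e ^ (-w) + β`, the equation reads `z' = e ^ z ψ(z)`, so `(log ψ(z))' = -z`.
theorem exp_neg_integral (hz : IsThresholdCurve β N z) (hβ : 0 < β) {t : ℝ}
    (ht : t ∈ Icc (0 : ℝ) 1) :
    exp (-∫ u in (0 : ℝ)..t, z u) = ((1 + z t) * exp (-z t) + β) / (1 + β) := by
  have hpos : ∀ u ∈ Icc (0 : ℝ) 1, 0 < (1 + z u) * exp (-z u) + β := fun u hu ↦ by
    have := (hz.mem_Icc u hu).1
    positivity
  have hlog : ∀ u ∈ Icc (0 : ℝ) 1,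
      HasDerivAt (fun u ↦ -log ((1 + z u) * exp (-z u) + β)) (z u) u := fun u hu ↦ by
    have hzu := hz.hasDerivAt u hu
    have hψ := (((hzu.const_add 1).mul hzu.neg.exp).add_const β).log (hpos u hu).ne'
    refine hψ.neg.congr_deriv ?_
    have hpos_u := (hpos u hu).ne'
    simp only [Pi.mul_apply, Pi.neg_apply] at hpos_u ⊢
    rw [← neg_div, div_eq_iff hpos_u]
    have hcancel : exp (-z u) * exp (z u) = 1 := by rw [← exp_add, neg_add_cancel, exp_zero]
    linear_combination z u * β * hcancel
  have hsub : uIcc 0 t ⊆ Icc 0 1 := uIcc_of_le ht.1 ▸ Icc_subset_Icc_right ht.2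
  rw [intervalIntegral.integral_eq_sub_of_hasDerivAt (fun u hu ↦ hlog u (hsub hu))
    (hz.intervalIntegrable ht), hz.zero, neg_sub_neg, neg_sub, exp_sub, exp_log (hpos t ht)]
  norm_num [exp_log (show 0 < 1 + β by positivity)]

theorem integral_nonneg (hz : IsThresholdCurve β N z) {t : ℝ} (ht : t ∈ Icc (0 : ℝ) 1) :
    0 ≤ ∫ u in (0 : ℝ)..t, z u :=
  intervalIntegral.integral_nonneg ht.1 fun u hu ↦ (hz.mem_Icc u ⟨hu.1, hu.2.trans ht.2⟩).1

theorem integral_le_two (hz : IsThresholdCurve β N z) (hβ : 1 / 6 ≤ β) {t : ℝ}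
    (ht : t ∈ Icc (0 : ℝ) 1) : ∫ u in (0 : ℝ)..t, z u ≤ 2 := by
  have hseven : exp (-2) ≤ 1 / 7 := by
    have hcubic := sum_le_exp_of_nonneg (zero_le_two (α := ℝ)) 5
    rw [exp_neg, one_div]
    refine inv_anti₀ (by norm_num) (le_trans ?_ hcubic)
    norm_num [Finset.sum_range_succ, Nat.factorial]
  have hlower : 1 / 7 ≤ exp (-∫ u in (0 : ℝ)..t, z u) := by
    rw [hz.exp_neg_integral (by linarith) ht, le_div_iff₀ (by linarith)]
    have : 0 ≤ (1 + z t) * exp (-z t) := by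
      have := (hz.mem_Icc t ht).1
      positivity
    linarith
  exact neg_le_neg_iff.1 (exp_le_exp.1 (hseven.trans hlower))

theorem integral_min_mul_exp_neg_integral (hz : IsThresholdCurve β N z) (hβ : 0 < β) {y : ℝ}
    (hy : 0 ≤ y) (hyN : y ≤ N) :
    ∫ t in (0 : ℝ)..1, min y (z t) * exp (-∫ u in (0 : ℝ)..t, z u) =
      (1 + β)⁻¹ * (1 - exp (-y) - y * exp (-N)) := by
  have hcont := hz.continuousOn
  have hsubst := intervalIntegral.integral_comp_mul_deriv (a := 0) (b := 1)
    (g := fun w ↦ min y w * exp (-w)) (by rw [uIcc_of_le zero_le_one]; exact hz.hasDerivAt)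
    (by rw [uIcc_of_le zero_le_one]; fun_prop) (by fun_prop)
  rw [hz.zero, hz.one, integral_min_mul_exp_neg hy hyN] at hsubst
  rw [← hsubst, ← intervalIntegral.integral_const_mul]
  refine intervalIntegral.integral_congr fun t ht ↦ ?_
  rw [uIcc_of_le zero_le_one] at ht
  have hcancel : exp (-z t) * exp (z t) = 1 := by rw [← exp_add, neg_add_cancel, exp_zero]
  simp only [hz.exp_neg_integral hβ ht, Function.comp_apply]
  rw [div_eq_inv_mul]
  linear_combination (-(1 + β)⁻¹ * β * min y (z t)) * hcancel

end IsThresholdCurve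

/-- The probability that the first accepted of `n` independent offers has a value exceeding a level
of tail probability `a`, when offers arrive uniformly on `[0, 1]` and those arriving at time `t`
are accepted with probability `q t`, largest values first. -/
noncomputable def selectionTail (n : ℕ) (q : ℝ → ℝ) (a : ℝ) : ℝ :=
  n * ∫ t in (0 : ℝ)..1, min a (q t) * (1 - ∫ u in (0 : ℝ)..t, q u) ^ (n - 1)

theorem selectionTail_congr {n : ℕ} {q q' : ℝ → ℝ} (h : EqOn q q' (Icc 0 1)) (a : ℝ) :
    selectionTail n q a = selectionTail n q' a := by
  rw [selectionTail, selectionTail]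
  congr 1
  refine intervalIntegral.integral_congr fun t ht ↦ ?_
  rw [uIcc_of_le zero_le_one] at ht
  have hinner : ∫ u in (0 : ℝ)..t, q u = ∫ u in (0 : ℝ)..t, q' u :=
    intervalIntegral.integral_congr (h.mono (uIcc_of_le ht.1 ▸ Icc_subset_Icc_right ht.2))
  simp only [h ht, hinner]

theorem IsThresholdCurve.exp_neg_integral_le_pow {β : ℝ} {n : ℕ} {z : ℝ → ℝ}
    (hz : IsThresholdCurve β n z) (hn : (6 : ℝ) ≤ n) (hβ : 1 / 6 ≤ β) {t : ℝ}
    (ht : t ∈ Icc (0 : ℝ) 1) :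
    (1 - 4 / (n : ℝ)) * exp (-∫ u in (0 : ℝ)..t, z u) ≤
      (1 - (∫ u in (0 : ℝ)..t, z u) / n) ^ (n - 1) := by
  have hn₀ : (0 : ℝ) < n := by linarith
  set Z := ∫ u in (0 : ℝ)..t, z u
  have hZ₀ : 0 ≤ Z := hz.integral_nonneg ht
  have hZ₂ : Z ≤ 2 := hz.integral_le_two hβ ht
  calc (1 - 4 / (n : ℝ)) * exp (-Z) ≤ exp (-Z) * (1 - Z ^ 2 / n) := by
        rw [mul_comm]; gcongr; nlinarith
    _ ≤ (1 - Z / n) ^ n :=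
        exp_neg_mul_one_sub_sq_div_le (by rw [abs_of_nonneg hZ₀]; linarith)
    _ ≤ (1 - Z / n) ^ (n - 1) := pow_le_pow_of_le_one
        (sub_nonneg.2 ((div_le_one hn₀).2 (by linarith))) (sub_le_self _ (by positivity))
        (Nat.sub_le n 1)

theorem IsThresholdCurve.le_selectionTail {β : ℝ} {n : ℕ} {z : ℝ → ℝ}
    (hz : IsThresholdCurve β n z) (hn : (6 : ℝ) ≤ n) (hβ : 1 / 6 ≤ β) {a : ℝ}
    (ha : a ∈ Icc (0 : ℝ) 1) :
    (1 - 6 / (n : ℝ)) * (1 + β)⁻¹ * (1 - (1 - a) ^ n) ≤ selectionTail n (fun t ↦ z t / n) a := by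
  have hn₀ : (0 : ℝ) < n := by linarith
  have hcont := hz.continuousOn
  have hZcont : ContinuousOn (fun t ↦ ∫ u in (0 : ℝ)..t, z u) (Icc 0 1) := by
    simpa only [uIcc_of_le zero_le_one] using
      intervalIntegral.continuousOn_primitive_interval'
        (hz.intervalIntegrable ⟨zero_le_one, le_rfl⟩) left_mem_uIcc
  calc (1 - 6 / (n : ℝ)) * (1 + β)⁻¹ * (1 - (1 - a) ^ n)
      = (1 + β)⁻¹ * ((1 - 6 / (n : ℝ)) * (1 - (1 - n * a / n) ^ n)) := by
        rw [mul_div_cancel_left₀ a hn₀.ne']; ring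
    _ ≤ (1 + β)⁻¹ * ((1 - 4 / (n : ℝ)) * (1 - exp (-(n * a)) - n * a * exp (-n))) := by
        refine mul_le_mul_of_nonneg_left ?_ (inv_nonneg.2 (by linarith))
        exact ratio_mul_one_sub_pow_le hn (mul_nonneg hn₀.le ha.1)
          (mul_le_of_le_one_right hn₀.le ha.2)
    _ = ∫ t in (0 : ℝ)..1,
          min (n * a) (z t) * ((1 - 4 / (n : ℝ)) * exp (-∫ u in (0 : ℝ)..t, z u)) := by
        rw [mul_left_comm, ← hz.integral_min_mul_exp_neg_integral (by linarith)
          (mul_nonneg hn₀.le ha.1) (mul_le_of_le_one_right hn₀.le ha.2),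
          ← intervalIntegral.integral_const_mul]
        simp only [mul_left_comm]
    _ ≤ ∫ t in (0 : ℝ)..1,
          min (n * a) (z t) * (1 - (∫ u in (0 : ℝ)..t, z u) / n) ^ (n - 1) := by
        refine intervalIntegral.integral_mono_on zero_le_one ?_ ?_ fun t ht ↦ ?_
        · exact ContinuousOn.intervalIntegrable (by rw [uIcc_of_le zero_le_one]; fun_prop)
        · exact ContinuousOn.intervalIntegrable (by rw [uIcc_of_le zero_le_one]; fun_prop)
        · exact mul_le_mul_of_nonneg_left (hz.exp_neg_integral_le_pow hn hβ ht)
            (le_min (mul_nonneg hn₀.le ha.1) (hz.mem_Icc t ht).1)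
    _ = selectionTail n (fun t ↦ z t / n) a := by
        rw [selectionTail, ← intervalIntegral.integral_const_mul]
        refine intervalIntegral.integral_congr fun t _ ↦ ?_
        simp only [intervalIntegral.integral_div]
        rw [← mul_assoc, mul_min_of_nonneg _ _ hn₀.le, mul_div_cancel₀ _ hn₀.ne']

end ThresholdCurve

section OfferLaw

open Set Filter Topology ENNReal

variable {ν : Measure ℝ} [IsProbabilityMeasure ν]

theorem measureReal_cdf_le (hν : Continuous (cdf ν)) {c : ℝ} (hc : c ∈ Icc (0 : ℝ) 1) :
    ν.real {x | cdf ν x ≤ c} = c := by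
  rcases hc.2.eq_or_lt with rfl | hc₁
  · simp [cdf_le_one]
  rcases {x | cdf ν x ≤ c}.eq_empty_or_nonempty with hempty | hne
  · rw [hempty, measureReal_empty]
    by_contra hc₀
    obtain ⟨x, hx⟩ :=
      ((tendsto_cdf_atBot ν).eventually (gt_mem_nhds (hc.1.lt_of_ne hc₀))).exists
    exact (hempty ▸ hx.le : x ∈ (∅ : Set ℝ))
  have hbdd : BddAbove {x | cdf ν x ≤ c} := by
    obtain ⟨b, hb⟩ := ((tendsto_cdf_atTop ν).eventually (lt_mem_nhds hc₁)).exists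
    exact ⟨b, fun x hx ↦ le_of_not_gt fun hbx ↦ (hb.trans_le (monotone_cdf ν hbx.le)).not_ge hx⟩
  set w := sSup {x | cdf ν x ≤ c}
  have hw_le : cdf ν w ≤ c := (isClosed_le hν continuous_const).csSup_mem hne hbdd
  have hw_ge : c ≤ cdf ν w := by
    refine ge_of_tendsto (x := 𝓝[>] w) (f := cdf ν)
      ((hν.tendsto w).mono_left nhdsWithin_le_nhds) ?_
    filter_upwards [self_mem_nhdsWithin] with x hx
    exact le_of_not_ge fun hxc ↦ (le_csSup hbdd hxc).not_gt hx
  have hIic : {x | cdf ν x ≤ c} = Iic w :=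
    Subset.antisymm (fun x hx ↦ le_csSup hbdd hx) fun x hx ↦ (monotone_cdf ν hx).trans hw_le
  rw [hIic, ← cdf_eq_real]
  exact hw_le.antisymm hw_ge

theorem measureReal_one_sub_cdf_lt (hν : Continuous (cdf ν)) {a : ℝ} (ha : a ∈ Icc (0 : ℝ) 1) :
    ν.real {x | 1 - cdf ν x < a} = a := by
  have hcompl : {x | 1 - cdf ν x < a} = {x | cdf ν x ≤ 1 - a}ᶜ := by
    ext x; simp [sub_lt_comm]
  rw [hcompl, probReal_compl_eq_one_sub (measurableSet_le hν.measurable measurable_const),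
    measureReal_cdf_le hν ⟨sub_nonneg.2 ha.2, sub_le_self 1 ha.1⟩, sub_sub_self]

theorem measureReal_Ioi_inter_one_sub_cdf_lt (hν : Continuous (cdf ν)) {a : ℝ}
    (ha : a ∈ Icc (0 : ℝ) 1) (v : ℝ) :
    ν.real (Ioi v ∩ {x | 1 - cdf ν x < a}) = min (1 - cdf ν v) a := by
  rcases lt_or_ge (1 - cdf ν v) a with h | h
  · have hsub : Ioi v ⊆ {x | 1 - cdf ν x < a} := fun x hx ↦
      (sub_le_sub_left (monotone_cdf ν (le_of_lt hx)) 1).trans_lt h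
    rw [inter_eq_left.2 hsub, min_eq_left h.le, ← compl_Iic,
      probReal_compl_eq_one_sub measurableSet_Iic, cdf_eq_real]
  · have hsub : {x | 1 - cdf ν x < a} ⊆ Ioi v := fun x hx ↦
      lt_of_not_ge fun hxv ↦ (h.trans (sub_le_sub_left (monotone_cdf ν hxv) 1)).not_gt hx
    rw [inter_eq_right.2 hsub, min_eq_right h, measureReal_one_sub_cdf_lt hν ha]

theorem setLIntegral_snd_prod {α β : Type*} [MeasurableSpace α] [MeasurableSpace β]
    {μ : Measure α} [SFinite μ] {ρ : Measure β} [SFinite ρ] {E : Set (α × β)}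
    (hE : MeasurableSet E) {g : β → ℝ≥0∞} (hg : Measurable g) :
    ∫⁻ p in E, g p.2 ∂μ.prod ρ = ∫⁻ b, μ ((·, b) ⁻¹' E) * g b ∂ρ := by
  have hgE : Measurable (E.indicator fun p ↦ g p.2) := (hg.comp measurable_snd).indicator hE
  rw [← lintegral_indicator hE, lintegral_prod_symm _ hgE.aemeasurable]
  refine lintegral_congr fun b ↦ ?_
  calc ∫⁻ a, E.indicator (fun p ↦ g p.2) (a, b) ∂μ
      = ∫⁻ a, ((·, b) ⁻¹' E).indicator (fun _ ↦ g b) a ∂μ := rfl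
    _ = μ ((·, b) ⁻¹' E) * g b := by
        rw [lintegral_indicator_const (measurable_prodMk_right hE), mul_comm]

theorem ofReal_intervalIntegral_eq_lintegral {f : ℝ → ℝ} {a b : ℝ} (hab : a ≤ b)
    (hf : IntervalIntegrable f volume a b) (hf₀ : ∀ t ∈ Icc a b, 0 ≤ f t) :
    ENNReal.ofReal (∫ t in a..b, f t) = ∫⁻ t in Icc a b, ENNReal.ofReal (f t) := by
  rw [intervalIntegral.integral_of_le hab, ← integral_Icc_eq_integral_Ioc,
    ofReal_integral_eq_lintegral_ofReal ((intervalIntegrable_iff_integrableOn_Icc_of_le hab).1 hf)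
      ((ae_restrict_mem measurableSet_Icc).mono hf₀)]

/-- The law of an offer `(x, t)`: its value `x` has law `ν` and, independently, its arrival time
`t` is uniform on `[0, 1]`. -/
noncomputable def offerLaw (ν : Measure ℝ) : Measure (ℝ × ℝ) :=
  ν.prod (volume.restrict (Icc 0 1))

instance : IsProbabilityMeasure (offerLaw ν) :=
  have : IsProbabilityMeasure (volume.restrict (Icc (0 : ℝ) 1)) := ⟨by simp⟩
  inferInstanceAs (IsProbabilityMeasure (ν.prod _))

theorem ae_offerLaw_snd_mem_Icc {ν : Measure ℝ} : ∀ᵐ p ∂offerLaw ν, p.2 ∈ Icc (0 : ℝ) 1 :=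
  Measure.quasiMeasurePreserving_snd.ae (ae_restrict_mem measurableSet_Icc)

/-- The offers `(x, t)` accepted by the oblivious rule with threshold `q`. When `cdf ν` is
continuous, an offer arriving at time `t` is accepted with probability `q t`. -/
def acceptSet (ν : Measure ℝ) (q : ℝ → ℝ) : Set (ℝ × ℝ) :=
  {p | 1 - cdf ν p.1 < q p.2}

variable {q : ℝ → ℝ}

theorem measurableSet_acceptSet {ν : Measure ℝ} (hq : Measurable q) :
    MeasurableSet (acceptSet ν q) :=
  measurableSet_lt (((monotone_cdf ν).measurable.comp measurable_fst).const_sub 1)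
    (hq.comp measurable_snd)

theorem offerLaw_acceptSet_inter_le (hν : Continuous (cdf ν)) (hq : Continuous q)
    (hq_mem : ∀ t, q t ∈ Icc (0 : ℝ) 1) {t : ℝ} (ht : t ∈ Icc (0 : ℝ) 1) :
    offerLaw ν (acceptSet ν q ∩ {p | p.2 ≤ t}) = ENNReal.ofReal (∫ u in (0 : ℝ)..t, q u) := by
  have hrestrict : (offerLaw ν).restrict {p | p.2 ≤ t} = ν.prod (volume.restrict (Icc 0 t)) := by
    have hIcc : Iic t ∩ Icc 0 1 = Icc 0 t := by
      rw [← Ici_inter_Iic, ← Ici_inter_Iic, inter_left_comm, Iic_inter_Iic, min_eq_left ht.2]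
    calc (offerLaw ν).restrict {p | p.2 ≤ t}
        = (ν.prod (volume.restrict (Icc 0 1))).restrict (univ ×ˢ Iic t) := by
          rw [univ_prod]; rfl
      _ = ν.prod (volume.restrict (Icc 0 t)) := by
          rw [← Measure.prod_restrict, Measure.restrict_univ,
            Measure.restrict_restrict measurableSet_Iic, hIcc]
  have hA : MeasurableSet (acceptSet ν q) := measurableSet_acceptSet hq.measurable
  rw [← Measure.restrict_apply hA, hrestrict, Measure.prod_apply_symm hA,
    ofReal_intervalIntegral_eq_lintegral ht.1 (hq.intervalIntegrable _ _)
      fun u _ ↦ (hq_mem u).1]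
  refine lintegral_congr fun u ↦ ?_
  rw [← ofReal_measureReal]
  exact congrArg ENNReal.ofReal (measureReal_one_sub_cdf_lt hν (hq_mem u))

theorem offerLaw_compl_acceptSet_inter_le (hν : Continuous (cdf ν)) (hq : Continuous q)
    (hq_mem : ∀ t, q t ∈ Icc (0 : ℝ) 1) {t : ℝ} (ht : t ∈ Icc (0 : ℝ) 1) :
    offerLaw ν (acceptSet ν q ∩ {p | p.2 ≤ t})ᶜ =
      ENNReal.ofReal (1 - ∫ u in (0 : ℝ)..t, q u) := by
  have hmeas : MeasurableSet (acceptSet ν q ∩ {p | p.2 ≤ t}) :=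
    (measurableSet_acceptSet hq.measurable).inter
      (measurableSet_le measurable_snd measurable_const)
  rw [prob_compl_eq_one_sub hmeas, offerLaw_acceptSet_inter_le hν hq hq_mem ht,
    ENNReal.ofReal_sub _ (intervalIntegral.integral_nonneg ht.1 fun u _ ↦ (hq_mem u).1),
    ENNReal.ofReal_one]

theorem setLIntegral_offerLaw_acceptSet_lt (hν : Continuous (cdf ν)) (hq : Measurable q)
    (hq_mem : ∀ t, q t ∈ Icc (0 : ℝ) 1) (v : ℝ) {g : ℝ → ℝ≥0∞} (hg : Measurable g) :
    ∫⁻ p in acceptSet ν q ∩ {p | v < p.1}, g p.2 ∂offerLaw ν =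
      ∫⁻ t in Icc 0 1, ENNReal.ofReal (min (1 - cdf ν v) (q t)) * g t := by
  rw [offerLaw, setLIntegral_snd_prod
    ((measurableSet_acceptSet hq).inter (measurableSet_lt measurable_const measurable_fst)) hg]
  refine lintegral_congr fun t ↦ ?_
  rw [← measureReal_Ioi_inter_one_sub_cdf_lt hν (hq_mem t), ofReal_measureReal, inter_comm]
  rfl

end OfferLaw

section FirstAccepted

open Set ENNReal

theorem pi_mem_and_forall_ne_mem {α : Type*} [MeasurableSpace α] {ρ : Measure α} [SigmaFinite ρ]
    {n : ℕ} {C : Set α} (hC : MeasurableSet C) {D : Set (α × α)} (hD : MeasurableSet D)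
    (i : Fin n) :
    Measure.pi (fun _ ↦ ρ) {p | p i ∈ C ∧ ∀ j ≠ i, (p i, p j) ∈ D} =
      ∫⁻ a in C, ρ (Prod.mk a ⁻¹' D) ^ (n - 1) ∂ρ := by
  obtain _ | m := n
  · exact i.elim0
  set S : Set (α × (Fin m → α)) := {r | r.1 ∈ C ∧ ∀ j, (r.1, r.2 j) ∈ D}
  have hS : MeasurableSet S := by
    simp only [S, ofPred_and, ofPred_forall]
    exact (measurable_fst hC).inter (.iInter fun j ↦ hD.preimage (by fun_prop))
  have hpreimage : {p : Fin (m + 1) → α | p i ∈ C ∧ ∀ j ≠ i, (p i, p j) ∈ D} =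
      MeasurableEquiv.piFinSuccAbove (fun _ ↦ α) i ⁻¹' S := by
    ext p
    exact and_congr_right fun _ ↦ (Fin.forall_iff_succAbove i).trans (by simp [Fin.removeNth])
  rw [hpreimage, (measurePreserving_piFinSuccAbove (fun _ ↦ ρ) i).measure_preimage
    hS.nullMeasurableSet, Measure.prod_apply hS, ← lintegral_indicator hC]
  refine lintegral_congr fun a ↦ ?_
  by_cases ha : a ∈ C
  · have hsection : Prod.mk a ⁻¹' S = univ.pi fun _ ↦ Prod.mk a ⁻¹' D := by
      ext r; simp [S, ha]
    simp [hsection, Measure.pi_pi, ha]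
  · simp [S, ha]

theorem pi_exists_mem {ι α : Type*} [Fintype ι] [MeasurableSpace α] {ρ : Measure α}
    [IsProbabilityMeasure ρ] {C : Set α} (hC : MeasurableSet C) :
    Measure.pi (fun _ : ι ↦ ρ) {p | ∃ i, p i ∈ C} = 1 - ρ Cᶜ ^ Fintype.card ι := by
  have hcompl : {p : ι → α | ∃ i, p i ∈ C} = (univ.pi fun _ ↦ Cᶜ)ᶜ := by ext p; simp
  rw [hcompl, prob_compl_eq_one_sub (.univ_pi fun _ ↦ hC.compl), Measure.pi_pi]
  simp

theorem pi_offerLaw_exists_lt {ν : Measure ℝ} [IsProbabilityMeasure ν] (n : ℕ) (v : ℝ) :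
    Measure.pi (fun _ : Fin n ↦ offerLaw ν) {p | ∃ i, v < (p i).1} =
      ENNReal.ofReal (1 - cdf ν v ^ n) := by
  have hcompl : offerLaw ν (Prod.fst ⁻¹' Ioi v)ᶜ = ENNReal.ofReal (cdf ν v) := by
    rw [← preimage_compl, compl_Ioi, ← prod_univ, offerLaw, Measure.prod_prod, ← ofReal_cdf]
    simp
  have hpi := pi_exists_mem (ι := Fin n) (ρ := offerLaw ν)
    (measurable_fst (measurableSet_Ioi (a := v)))
  rw [hcompl, Fintype.card_fin, ← ENNReal.ofReal_pow (cdf_nonneg ν v), ← ENNReal.ofReal_one,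
    ← ENNReal.ofReal_sub _ (pow_nonneg (cdf_nonneg ν v) n)] at hpi
  exact hpi

/-- The event that offer `i` lies in `A` and arrives strictly before every other offer in `A`.
Ties are excluded, so these events are pairwise disjoint. -/
def firstAccepted {ι : Type*} (A : Set (ℝ × ℝ)) (i : ι) : Set (ι → ℝ × ℝ) :=
  {p | p i ∈ A ∧ ∀ j ≠ i, ¬(p j ∈ A ∧ (p j).2 ≤ (p i).2)}

theorem pairwise_disjoint_firstAccepted {ι : Type*} (A : Set (ℝ × ℝ)) :
    Pairwise (Function.onFun Disjoint (firstAccepted (ι := ι) A)) := by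
  refine fun i j hij ↦ disjoint_left.2 fun p hi hj ↦ ?_
  rcases le_total (p i).2 (p j).2 with h | h
  · exact hj.2 i hij ⟨hi.1, h⟩
  · exact hi.2 j hij.symm ⟨hj.1, h⟩

theorem measurableSet_firstAccepted {ι : Type*} [Countable ι] {A : Set (ℝ × ℝ)}
    (hA : MeasurableSet A) (i : ι) : MeasurableSet (firstAccepted A i) := by
  have hmem (j : ι) : MeasurableSet {p : ι → ℝ × ℝ | p j ∈ A} := measurable_pi_apply j hA
  have hle (j : ι) : MeasurableSet {p : ι → ℝ × ℝ | (p j).2 ≤ (p i).2} :=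
    measurableSet_le (measurable_pi_apply j).snd (measurable_pi_apply i).snd
  simp only [firstAccepted, ofPred_and, ofPred_forall]
  exact (hmem i).inter (.iInter fun j ↦ .iInter fun _ ↦ ((hmem j).inter (hle j)).compl)

theorem measurableSet_firstAccepted_inter_lt {ι : Type*} [Countable ι] {A : Set (ℝ × ℝ)}
    (hA : MeasurableSet A) (i : ι) (v : ℝ) :
    MeasurableSet (firstAccepted A i ∩ {p | v < (p i).1}) :=
  (measurableSet_firstAccepted hA i).inter
    (measurableSet_lt measurable_const (measurable_pi_apply i).fst)

theorem pi_firstAccepted_inter {ρ : Measure (ℝ × ℝ)} [SigmaFinite ρ] {n : ℕ}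
    {A C : Set (ℝ × ℝ)} (hA : MeasurableSet A) (hC : MeasurableSet C) (i : Fin n) :
    Measure.pi (fun _ ↦ ρ) (firstAccepted A i ∩ {p | p i ∈ C}) =
      ∫⁻ a in A ∩ C, ρ (A ∩ {b | b.2 ≤ a.2})ᶜ ^ (n - 1) ∂ρ := by
  have hlate : MeasurableSet {r : (ℝ × ℝ) × (ℝ × ℝ) | ¬(r.2 ∈ A ∧ r.2.2 ≤ r.1.2)} :=
    ((measurable_snd hA).inter
      (measurableSet_le measurable_snd.snd measurable_fst.snd)).compl
  refine Eq.trans (congrArg _ ?_) (pi_mem_and_forall_ne_mem (hA.inter hC) hlate i)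
  exact ext fun p ↦ and_right_comm

variable {ν : Measure ℝ} [IsProbabilityMeasure ν] {q : ℝ → ℝ}

theorem pi_offerLaw_firstAccepted_inter_lt (hν : Continuous (cdf ν)) (hq : Continuous q)
    (hq_mem : ∀ t, q t ∈ Icc (0 : ℝ) 1) (v : ℝ) {n : ℕ} (i : Fin n) :
    Measure.pi (fun _ ↦ offerLaw ν) (firstAccepted (acceptSet ν q) i ∩ {p | v < (p i).1}) =
      ENNReal.ofReal (∫ t in (0 : ℝ)..1,
        min (1 - cdf ν v) (q t) * (1 - ∫ u in (0 : ℝ)..t, q u) ^ (n - 1)) := by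
  have : Continuous fun t ↦ ∫ u in (0 : ℝ)..t, q u :=
    intervalIntegral.continuous_primitive (fun a b ↦ hq.intervalIntegrable a b) 0
  have hQ_le : ∀ t ∈ Icc (0 : ℝ) 1, 0 ≤ 1 - ∫ u in (0 : ℝ)..t, q u := fun t ht ↦ by
    have := intervalIntegral.integral_mono_on ht.1 (hq.intervalIntegrable 0 t)
      (intervalIntegrable_const (μ := volume) (c := (1 : ℝ))) fun u _ ↦ (hq_mem u).2
    simp only [intervalIntegral.integral_const, sub_zero, smul_eq_mul, mul_one] at this
    linarith [ht.2]
  have hmin (t : ℝ) : 0 ≤ min (1 - cdf ν v) (q t) :=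
    le_min (sub_nonneg.2 (cdf_le_one ν v)) (hq_mem t).1
  calc Measure.pi (fun _ ↦ offerLaw ν) (firstAccepted (acceptSet ν q) i ∩ {p | v < (p i).1})
      = ∫⁻ p in acceptSet ν q ∩ {p | v < p.1},
          offerLaw ν (acceptSet ν q ∩ {b | b.2 ≤ p.2})ᶜ ^ (n - 1) ∂offerLaw ν :=
        pi_firstAccepted_inter (measurableSet_acceptSet hq.measurable)
          (measurableSet_lt measurable_const measurable_fst) i
    _ = ∫⁻ p in acceptSet ν q ∩ {p | v < p.1},
          ENNReal.ofReal ((1 - ∫ u in (0 : ℝ)..p.2, q u) ^ (n - 1)) ∂offerLaw ν := by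
        refine lintegral_congr_ae (ae_restrict_of_ae (ae_offerLaw_snd_mem_Icc.mono fun p hp ↦ ?_))
        simp only
        rw [offerLaw_compl_acceptSet_inter_le hν hq hq_mem hp, ENNReal.ofReal_pow (hQ_le _ hp)]
    _ = ∫⁻ t in Icc 0 1, ENNReal.ofReal (min (1 - cdf ν v) (q t)) *
          ENNReal.ofReal ((1 - ∫ u in (0 : ℝ)..t, q u) ^ (n - 1)) :=
        setLIntegral_offerLaw_acceptSet_lt hν hq.measurable hq_mem v
          (g := fun t ↦ ENNReal.ofReal ((1 - ∫ u in (0 : ℝ)..t, q u) ^ (n - 1))) (by fun_prop)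
    _ = ENNReal.ofReal (∫ t in (0 : ℝ)..1,
          min (1 - cdf ν v) (q t) * (1 - ∫ u in (0 : ℝ)..t, q u) ^ (n - 1)) := by
        simp only [← ENNReal.ofReal_mul (hmin _)]
        refine (ofReal_intervalIntegral_eq_lintegral zero_le_one
          (Continuous.intervalIntegrable (by fun_prop) 0 1) fun t ht ↦ ?_).symm
        exact mul_nonneg (hmin t) (pow_nonneg (hQ_le t ht) _)

theorem pi_offerLaw_exists_firstAccepted_lt (hν : Continuous (cdf ν)) (hq : Continuous q)
    (hq_mem : ∀ t, q t ∈ Icc (0 : ℝ) 1) (n : ℕ) (v : ℝ) :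
    Measure.pi (fun _ : Fin n ↦ offerLaw ν)
        {p | ∃ i, p ∈ firstAccepted (acceptSet ν q) i ∧ v < (p i).1} =
      ENNReal.ofReal (selectionTail n q (1 - cdf ν v)) := by
  rw [ofPred_exists]
  refine (measure_iUnion (fun i j hij ↦ ?_) fun i ↦ ?_).trans ?_
  · exact (pairwise_disjoint_firstAccepted _ hij).mono inter_subset_left inter_subset_left
  · exact measurableSet_firstAccepted_inter_lt (measurableSet_acceptSet hq.measurable) i v
  · rw [selectionTail, ENNReal.ofReal_mul n.cast_nonneg, ENNReal.ofReal_natCast]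
    refine (tsum_congr fun i ↦ pi_offerLaw_firstAccepted_inter_lt hν hq hq_mem v i).trans ?_
    simp

end FirstAccepted

section ObliviousRule

open Set ENNReal

/-- `o` is the choice of the rule accepting exactly the offers in `A`: an earliest accepted offer if
there is one, and `none` otherwise. -/
structure IsObliviousChoice {ι : Type*} (A : Set (ℝ × ℝ)) (p : ι → ℝ × ℝ) (o : Option ι) :
    Prop where
  mem : ∀ i, o = some i → p i ∈ A ∧ ∀ j, p j ∈ A → (p i).2 ≤ (p j).2
  isSome : (∃ i, p i ∈ A) → o.isSome

/-- The value obtained by choosing offer `o` from the list `p`, which is `0` when no offer is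
chosen. -/
def payoff {ι : Type*} (p : ι → ℝ × ℝ) (o : Option ι) : ℝ :=
  (o.map fun i ↦ (p i).1).getD 0

theorem payoff_nonneg {ι : Type*} {p : ι → ℝ × ℝ} (hp : ∀ i, 0 ≤ (p i).1) :
    ∀ o : Option ι, 0 ≤ payoff p o
  | none => le_rfl
  | some i => hp i

theorem IsObliviousChoice.eq_some {ι : Type*} {A : Set (ℝ × ℝ)} {p : ι → ℝ × ℝ} {o : Option ι}
    (ho : IsObliviousChoice A p o) {i : ι} (hi : p ∈ firstAccepted A i) : o = some i := by
  obtain ⟨k, rfl⟩ := Option.isSome_iff_exists.1 (ho.isSome ⟨i, hi.1⟩)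
  obtain ⟨hk, hk_first⟩ := ho.mem k rfl
  by_contra hki
  exact hi.2 k (fun h ↦ hki (congrArg some h)) ⟨hk, hk_first i hi.1⟩

theorem IsObliviousChoice.congr {ι : Type*} {A A' : Set (ℝ × ℝ)} {p : ι → ℝ × ℝ} {o : Option ι}
    (ho : IsObliviousChoice A p o) (h : ∀ i, p i ∈ A ↔ p i ∈ A') : IsObliviousChoice A' p o := by
  refine ⟨?_, ?_⟩ <;> simp only [← h]
  exacts [ho.mem, ho.isSome]

theorem mul_integral_le_integral_of_mul_measure_lt_le {Ω : Type*} [MeasurableSpace Ω]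
    {μ : Measure Ω} {f g : Ω → ℝ} (hf : Integrable f μ) (hg : Integrable g μ) (hf₀ : 0 ≤ f)
    (hg₀ : 0 ≤ g) {c : ℝ} (hc : 0 ≤ c)
    (h : ∀ v > 0, ENNReal.ofReal c * μ {ω | v < f ω} ≤ μ {ω | v < g ω}) :
    c * ∫ ω, f ω ∂μ ≤ ∫ ω, g ω ∂μ := by
  rw [← ENNReal.ofReal_le_ofReal_iff (integral_nonneg hg₀), ENNReal.ofReal_mul hc,
    ofReal_integral_eq_lintegral_ofReal hf (ae_of_all _ hf₀),
    ofReal_integral_eq_lintegral_ofReal hg (ae_of_all _ hg₀),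
    lintegral_eq_lintegral_meas_lt μ (ae_of_all _ hf₀) hf.aemeasurable,
    lintegral_eq_lintegral_meas_lt μ (ae_of_all _ hg₀) hg.aemeasurable,
    ← lintegral_const_mul' _ _ ENNReal.ofReal_ne_top]
  exact setLIntegral_mono' measurableSet_Ioi h

variable {Ω : Type*} [MeasurableSpace Ω] {μ : Measure Ω} {ν : Measure ℝ} [IsProbabilityMeasure ν]
  {n : ℕ} {S : Ω → Fin n → ℝ × ℝ}

theorem measure_lt_iSup_le (hS : MeasurePreserving S μ (.pi fun _ ↦ offerLaw ν)) {v : ℝ}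
    (hv : 0 ≤ v) : μ {ω | v < ⨆ i, (S ω i).1} ≤ ENNReal.ofReal (1 - cdf ν v ^ n) := by
  rw [← pi_offerLaw_exists_lt n v]
  refine (measure_mono fun ω hω ↦ ?_).trans (hS.measure_preimage_le _)
  change ∃ i, v < (S ω i).1
  by_contra! hle
  exact (Real.iSup_le hle hv).not_gt hω

theorem ae_arrival_mem_Icc (hS : MeasurePreserving S μ (.pi fun _ ↦ offerLaw ν)) :
    ∀ᵐ ω ∂μ, ∀ i, (S ω i).2 ∈ Icc (0 : ℝ) 1 :=
  ae_all_iff.2 fun i ↦ hS.quasiMeasurePreserving.ae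
    ((measurePreserving_eval (fun _ ↦ offerLaw ν) i).quasiMeasurePreserving.ae
      ae_offerLaw_snd_mem_Icc)

variable {q : ℝ → ℝ} {sel : Ω → Option (Fin n)}

theorem selectionTail_le_measure_lt_payoff (hS : MeasurePreserving S μ (.pi fun _ ↦ offerLaw ν))
    (hν : Continuous (cdf ν)) (hq : ContinuousOn q (Icc 0 1))
    (hq_mem : MapsTo q (Icc 0 1) (Icc 0 1))
    (hsel : ∀ ω, IsObliviousChoice (acceptSet ν q) (S ω) (sel ω)) (v : ℝ) :
    ENNReal.ofReal (selectionTail n q (1 - cdf ν v)) ≤ μ {ω | v < payoff (S ω) (sel ω)} := by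
  set q' := IccExtend zero_le_one ((Icc (0 : ℝ) 1).domRestrict q)
  have hq' : Continuous q' := (continuousOn_iff_continuous_domRestrict.1 hq).Icc_extend'
  have hq'_mem (t : ℝ) : q' t ∈ Icc (0 : ℝ) 1 := hq_mem (projIcc 0 1 zero_le_one t).2
  have heq : EqOn q q' (Icc 0 1) := fun t ht ↦
    (IccExtend_of_mem zero_le_one ((Icc (0 : ℝ) 1).domRestrict q) ht).symm
  have hmeas : MeasurableSet
      {p | ∃ i : Fin n, p ∈ firstAccepted (acceptSet ν q') i ∧ v < (p i).1} := by
    rw [ofPred_exists]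
    exact .iUnion fun i ↦
      measurableSet_firstAccepted_inter_lt (measurableSet_acceptSet hq'.measurable) i v
  rw [selectionTail_congr heq, ← pi_offerLaw_exists_firstAccepted_lt hν hq' hq'_mem n v,
    ← hS.measure_preimage hmeas.nullMeasurableSet]
  refine measure_mono_ae ((ae_arrival_mem_Icc hS).mono fun ω htime ↦ ?_)
  rintro ⟨i, hi, hiv⟩
  have hsel' : IsObliviousChoice (acceptSet ν q') (S ω) (sel ω) :=
    (hsel ω).congr fun j ↦ by simp only [acceptSet, mem_ofPred_eq, heq (htime j)]
  change v < payoff (S ω) (sel ω)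
  rwa [hsel'.eq_some hi]

theorem mul_integral_iSup_le_integral_payoff
    (hS : MeasurePreserving S μ (.pi fun _ ↦ offerLaw ν)) (hS₀ : ∀ ω i, 0 ≤ (S ω i).1)
    (hν : Continuous (cdf ν)) (hq : ContinuousOn q (Icc 0 1))
    (hq_mem : MapsTo q (Icc 0 1) (Icc 0 1))
    (hsel : ∀ ω, IsObliviousChoice (acceptSet ν q) (S ω) (sel ω))
    (hint_max : Integrable (fun ω ↦ ⨆ i, (S ω i).1) μ)
    (hint_sel : Integrable (fun ω ↦ payoff (S ω) (sel ω)) μ) {c : ℝ} (hc : 0 ≤ c)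
    (htail : ∀ a ∈ Icc (0 : ℝ) 1, c * (1 - (1 - a) ^ n) ≤ selectionTail n q a) :
    c * ∫ ω, ⨆ i, (S ω i).1 ∂μ ≤ ∫ ω, payoff (S ω) (sel ω) ∂μ := by
  refine mul_integral_le_integral_of_mul_measure_lt_le hint_max hint_sel
    (fun ω ↦ Real.iSup_nonneg (hS₀ ω)) (fun ω ↦ payoff_nonneg (hS₀ ω) _) hc fun v hv ↦ ?_
  have hlevel : 1 - cdf ν v ∈ Icc (0 : ℝ) 1 :=
    ⟨sub_nonneg.2 (cdf_le_one ν v), sub_le_self 1 (cdf_nonneg ν v)⟩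
  calc ENNReal.ofReal c * μ {ω | v < ⨆ i, (S ω i).1}
      ≤ ENNReal.ofReal c * ENNReal.ofReal (1 - cdf ν v ^ n) := by
        gcongr; exact measure_lt_iSup_le hS hv.le
    _ = ENNReal.ofReal (c * (1 - (1 - (1 - cdf ν v)) ^ n)) := by
        rw [sub_sub_self, ENNReal.ofReal_mul hc]
    _ ≤ ENNReal.ofReal (selectionTail n q (1 - cdf ν v)) :=
        ENNReal.ofReal_le_ofReal (htail _ hlevel)
    _ ≤ μ {ω | v < payoff (S ω) (sel ω)} :=
        selectionTail_le_measure_lt_payoff hS hν hq hq_mem hsel v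

theorem measurePreserving_pi_of_iIndepFun {Ω ι α : Type*} [MeasurableSpace Ω] [MeasurableSpace α]
    [Fintype ι] {μ : Measure Ω} [IsProbabilityMeasure μ] {ρ : Measure α} {s : ι → Ω → α}
    (hmeas : ∀ i, Measurable (s i)) (hindep : iIndepFun s μ) (hlaw : ∀ i, μ.map (s i) = ρ) :
    MeasurePreserving (fun ω i ↦ s i ω) μ (.pi fun _ ↦ ρ) := by
  refine ⟨measurable_pi_lambda _ hmeas, ?_⟩
  simpa only [hlaw] using
    (iIndepFun_iff_map_fun_eq_pi_map fun i ↦ (hmeas i).aemeasurable).1 hindep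

end ObliviousRule

/-- Fix `n ≥ 3`; let `β_n > 0` solve `∫_0^n dz/(1+z+β_n e^z) = 1` and
let `z : [0,1] → [0,n]` solve `z'(s) = 1 + z(s) + β_n e^{z(s)}`, `z(0) = 0` (so
`z(1) = n`).  Let `(x_1,t_1),…,(x_n,t_n)` be i.i.d. pairs where `x_i ≥ 0` has
continuous (atomless) CDF `F` and `t_i` is uniform on `[0,1]`, independent of `x_i`.
The oblivious stopping rule selects, among all indices `i` with
`1 − F(x_i) < z(t_i)/n`, the one with smallest `t_i` (receiving `0` if no index
qualifies); `x_τ` denotes the selected value.  Then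
`E[x_τ] ≥ (1 − 6/n)·(1 + β_n)⁻¹·E[max_i x_i]`. -/
theorem oblivious_rule_bound {Ω : Type*} [MeasurableSpace Ω]
    (μ : Measure Ω) [IsProbabilityMeasure μ]
    (n : ℕ) (hn : 3 ≤ n) (β : ℝ) (hβpos : 0 < β)
    (hβ : ∫ v in (0:ℝ)..(n : ℝ), (1 + v + β * Real.exp v)⁻¹ = 1)
    (z : ℝ → ℝ) (hz0 : z 0 = 0) (hz1 : z 1 = n)
    (hzrange : ∀ u ∈ Set.Icc (0:ℝ) 1, z u ∈ Set.Icc (0:ℝ) (n : ℝ))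
    (hzderiv : ∀ u ∈ Set.Icc (0:ℝ) 1,
      HasDerivAt z (1 + z u + β * Real.exp (z u)) u)
    (s : Fin n → Ω → ℝ × ℝ)
    (hmeas : ∀ i, Measurable (s i))
    (hx_nonneg : ∀ i ω, 0 ≤ (s i ω).1)
    (hindep : iIndepFun s μ)
    (hident : ∀ i, μ.map (s i)
      = (μ.map (fun ω => (s ⟨0, by omega⟩ ω).1)).prod
          ((volume : Measure ℝ).restrict (Set.Icc (0:ℝ) 1)))
    (hint_max : Integrable (fun ω => ⨆ i, (s i ω).1) μ)
    (F : ℝ → ℝ) (hF : ∀ v, F v = (μ {ω | (s ⟨0, by omega⟩ ω).1 ≤ v}).toReal)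
    (hFcont : Continuous F) :
    ∀ sel : Ω → Option (Fin n),
      (∀ ω i, sel ω = some i →
        (1 - F ((s i ω).1) < z ((s i ω).2) / n ∧
          ∀ j, 1 - F ((s j ω).1) < z ((s j ω).2) / n → (s i ω).2 ≤ (s j ω).2)) →
      (∀ ω, (∃ i, 1 - F ((s i ω).1) < z ((s i ω).2) / n) → (sel ω).isSome) →
      Integrable (fun ω => ((sel ω).map fun i => (s i ω).1).getD 0) μ →
      (1 - 6 / (n : ℝ)) * (1 + β)⁻¹ * (∫ ω, (⨆ i, (s i ω).1) ∂μ)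
        ≤ ∫ ω, ((sel ω).map fun i => (s i ω).1).getD 0 ∂μ := by
  intro sel hfirst hsome hint_sel
  have hn₀ : (0 : ℝ) < n := by norm_cast; omega
  rcases le_total (n : ℝ) 6 with hn₆ | hn₆
  · have hratio : 1 - 6 / (n : ℝ) ≤ 0 := sub_nonpos.2 ((one_le_div hn₀).2 hn₆)
    calc (1 - 6 / (n : ℝ)) * (1 + β)⁻¹ * ∫ ω, ⨆ i, (s i ω).1 ∂μ ≤ 0 :=
          mul_nonpos_of_nonpos_of_nonneg (mul_nonpos_of_nonpos_of_nonneg hratio (by positivity))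
            (integral_nonneg fun ω ↦ Real.iSup_nonneg fun i ↦ hx_nonneg i ω)
      _ ≤ ∫ ω, payoff (fun i ↦ s i ω) (sel ω) ∂μ :=
          integral_nonneg fun ω ↦ payoff_nonneg (fun i ↦ hx_nonneg i ω) (sel ω)
  · set ν := μ.map fun ω ↦ (s ⟨0, by omega⟩ ω).1
    have : IsProbabilityMeasure ν :=
      Measure.isProbabilityMeasure_map (hmeas _).fst.aemeasurable
    obtain rfl : F = cdf ν := funext fun v ↦ by
      rw [hF, cdf_eq_real, map_measureReal_apply (hmeas _).fst measurableSet_Iic]; rfl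
    have hz : IsThresholdCurve β n z := ⟨hz0, hz1, hzrange, hzderiv⟩
    have hβ₆ : 1 / 6 ≤ β := one_sixth_le_of_integral_inv_le_one hβpos.le hn₆ hβ.le
    have hlaw := measurePreserving_pi_of_iIndepFun (ρ := offerLaw ν) hmeas hindep hident
    refine mul_integral_iSup_le_integral_payoff hlaw (fun ω i ↦ hx_nonneg i ω) hFcont
      (hz.continuousOn.div_const n) (fun t ht ↦ ?_) (fun ω ↦ ⟨hfirst ω, hsome ω⟩)
      hint_max hint_sel ?_ fun a ↦ hz.le_selectionTail hn₆ hβ₆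
    · exact ⟨div_nonneg (hzrange t ht).1 hn₀.le, (div_le_one hn₀).2 (hzrange t ht).2⟩
    · exact mul_nonneg (sub_nonneg.2 ((div_le_one hn₀).2 hn₆)) (by positivity)
end

section
/- Fix n ≥ 3 and let β_n, z, Z be as defined. Then for every q ∈ [0,n], (1/(1+β_n))·(1 − e^{−q} − q e^{−n}) = ∫_0^1 min{z(t), q}·exp(−Z(t)) dt. -/
open Real MeasureTheory intervalIntegral

/-!
Write `F v = 1 + v + β e ^ v`, so that `z' = F z` and `F' = F - id`. Then `u = F ∘ z` solves the
linear equation `u' = (z' - z) u`, hence `F (z t) = F (z 0) exp (z t - z 0 - Z t)`. Solving for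
`exp (-Z t)` turns `exp (-Z t) dt` into `exp (-z) dz / (1 + β)` under the change of variables
`v = z t`, and what remains is the elementary integral of `min v q * exp (-v)`.
-/

section

open Set

theorem hasDerivAt_of_hasDerivWithinAt_uIcc {f : ℝ → ℝ} {f' a b x : ℝ}
    (hf : HasDerivWithinAt f f' (uIcc a b) x) (hx : x ∈ uIoo a b) : HasDerivAt f f' x :=
  hf.hasDerivAt (Icc_mem_nhds hx.1 hx.2)

theorem hasDerivAt_integral_of_continuousOn_uIcc {f : ℝ → ℝ} {a b x : ℝ}
    (hf : ContinuousOn f (uIcc a b)) (hx : x ∈ uIoo a b) :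
    HasDerivAt (fun y => ∫ u in a..y, f u) (f x) x := by
  have hax : uIcc a x ⊆ uIcc a b := uIcc_subset_uIcc_left (uIoo_subset_uIcc_self hx)
  exact integral_hasDerivAt_right (hf.mono hax).intervalIntegrable
    ((hf.mono uIoo_subset_uIcc_self).stronglyMeasurableAtFilter isOpen_Ioo x hx)
    (hf.continuousAt (Icc_mem_nhds hx.1 hx.2))

theorem eq_mul_exp_integral_of_hasDerivWithinAt {f u : ℝ → ℝ} {a b : ℝ}
    (hf : ContinuousOn f (uIcc a b))
    (hu : ∀ x ∈ uIcc a b, HasDerivWithinAt u (f x * u x) (uIcc a b) x) :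
    u b = u a * exp (∫ x in a..b, f x) := by
  set I : ℝ → ℝ := fun y => ∫ x in a..y, f x
  have hI : ContinuousOn I (uIcc a b) :=
    continuousOn_primitive_interval (hf.integrableOn_compact isCompact_uIcc)
  have hcont : ContinuousOn (fun y => u y * exp (-I y)) (uIcc a b) :=
    (HasDerivWithinAt.continuousOn hu).mul hI.neg.rexp
  have hderiv : ∀ x ∈ uIoo a b, HasDerivAt (fun y => u y * exp (-I y)) 0 x := fun x hx => by
    have hux := hasDerivAt_of_hasDerivWithinAt_uIcc (hu x (uIoo_subset_uIcc_self hx)) hx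
    have hIx : HasDerivAt I (f x) x := hasDerivAt_integral_of_continuousOn_uIcc hf hx
    exact (hux.mul hIx.fun_neg.exp).congr_deriv (by ring)
  have hconst : u b * exp (-I b) = u a := by
    have h := integral_eq_sub_of_hasDeriv_right hcont
      (fun x hx => (hderiv x hx).hasDerivWithinAt) intervalIntegrable_const
    simpa [I, sub_eq_zero] using h.symm
  rw [← hconst, mul_assoc, ← exp_add, neg_add_cancel, exp_zero, mul_one]

theorem integral_exp_neg (a b : ℝ) : ∫ v in a..b, exp (-v) = exp (-a) - exp (-b) := by
  rw [integral_comp_neg, integral_exp]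

theorem integral_id_mul_exp_neg (a b : ℝ) :
    ∫ v in a..b, v * exp (-v) = (1 + a) * exp (-a) - (1 + b) * exp (-b) := by
  have hderiv (v : ℝ) : HasDerivAt (fun v => -((1 + v) * exp (-v))) (v * exp (-v)) v :=
    (((hasDerivAt_id v).const_add 1).mul (hasDerivAt_neg v).exp).neg.congr_deriv (by
      simp only [id_eq]; ring)
  rw [integral_eq_sub_of_hasDerivAt (fun v _ => hderiv v)
    (Continuous.intervalIntegrable (by fun_prop) a b)]
  ring

theorem integral_min_mul_exp_neg_s4 {a b q : ℝ} (hq : q ∈ Icc a b) :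
    ∫ v in a..b, min v q * exp (-v) = (1 + a) * exp (-a) - exp (-q) - q * exp (-b) := by
  have hint (c d : ℝ) : IntervalIntegrable (fun v => min v q * exp (-v)) volume c d :=
    Continuous.intervalIntegrable (by fun_prop) c d
  have hleft : ∫ v in a..q, min v q * exp (-v) = ∫ v in a..q, v * exp (-v) :=
    integral_congr fun v hv => by
      rw [uIcc_of_le hq.1] at hv
      simp only [min_eq_left hv.2]
  have hright : ∫ v in q..b, min v q * exp (-v) = ∫ v in q..b, q * exp (-v) :=
    integral_congr fun v hv => by
      rw [uIcc_of_le hq.2] at hv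
      simp only [min_eq_right hv.1]
  rw [← integral_add_adjacent_intervals (hint a q) (hint q b), hleft, hright,
    integral_id_mul_exp_neg, intervalIntegral.integral_const_mul, integral_exp_neg]
  ring

section AutonomousODE

variable {F z : ℝ → ℝ} {a b : ℝ}

theorem comp_eq_mul_exp_sub_integral (hF : ∀ v, HasDerivAt F (F v - v) v)
    (hz : ∀ t ∈ uIcc a b, HasDerivWithinAt z (F (z t)) (uIcc a b) t) :
    F (z b) = F (z a) * exp (z b - z a - ∫ t in a..b, z t) := by
  have hzc : ContinuousOn z (uIcc a b) := HasDerivWithinAt.continuousOn hz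
  have hFc : Continuous F := continuous_iff_continuousAt.2 fun v => (hF v).continuousAt
  have hFz : ContinuousOn (fun t => F (z t)) (uIcc a b) := hFc.comp_continuousOn hzc
  have hlinear : F (z b) = F (z a) * exp (∫ t in a..b, (F (z t) - z t)) :=
    eq_mul_exp_integral_of_hasDerivWithinAt (u := fun t => F (z t)) (hFz.sub hzc)
      fun t ht => (hF (z t)).comp_hasDerivWithinAt t (hz t ht)
  have hspeed : ∫ t in a..b, F (z t) = z b - z a :=
    integral_eq_sub_of_hasDeriv_right hzc
      (fun t ht => (hasDerivAt_of_hasDerivWithinAt_uIcc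
        (hz t (uIoo_subset_uIcc_self ht)) ht).hasDerivWithinAt) hFz.intervalIntegrable
  rwa [integral_sub hFz.intervalIntegrable hzc.intervalIntegrable, hspeed] at hlinear

theorem mul_integral_comp_mul_exp_neg_integral {g : ℝ → ℝ}
    (hF : ∀ v, HasDerivAt F (F v - v) v)
    (hz : ∀ t ∈ uIcc a b, HasDerivWithinAt z (F (z t)) (uIcc a b) t)
    (hg : ContinuousOn g (z '' uIcc a b)) :
    F (z a) * ∫ t in a..b, g (z t) * exp (-∫ u in a..t, z u) =
      exp (z a) * ∫ v in z a..z b, g v * exp (-v) := by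
  have hzc : ContinuousOn z (uIcc a b) := HasDerivWithinAt.continuousOn hz
  have hFc : Continuous F := continuous_iff_continuousAt.2 fun v => (hF v).continuousAt
  have hpoint : ∀ t ∈ uIcc a b, F (z a) * exp (-∫ u in a..t, z u) =
      exp (z a) * (exp (-z t) * F (z t)) := fun t ht => by
    have hat : uIcc a t ⊆ uIcc a b := uIcc_subset_uIcc_left ht
    rw [comp_eq_mul_exp_sub_integral hF fun r hr => (hz r (hat hr)).mono hat,
      mul_left_comm _ (F (z a)), mul_left_comm _ (F (z a)), ← exp_add, ← exp_add]
    congr 2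
    ring
  calc F (z a) * ∫ t in a..b, g (z t) * exp (-∫ u in a..t, z u)
      = exp (z a) * ∫ t in a..b, g (z t) * exp (-z t) * F (z t) := by
        simp only [← intervalIntegral.integral_const_mul]
        refine integral_congr fun t ht => ?_
        linear_combination g (z t) * hpoint t ht
    _ = exp (z a) * ∫ v in z a..z b, g v * exp (-v) := by
        congr 1
        exact integral_comp_mul_deriv'' (g := fun v => g v * exp (-v)) hzc
          (fun t ht => (hasDerivAt_of_hasDerivWithinAt_uIcc
            (hz t (uIoo_subset_uIcc_self ht)) ht).hasDerivWithinAt)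
          (hFc.comp_continuousOn hzc) (hg.mul (by fun_prop))

end AutonomousODE

theorem hasDerivAt_one_add_add_mul_exp (β v : ℝ) :
    HasDerivAt (fun v => 1 + v + β * exp v) (1 + v + β * exp v - v) v :=
  (((hasDerivAt_id v).const_add 1).add ((Real.hasDerivAt_exp v).const_mul β)).congr_deriv (by ring)

theorem mysterious_useful_identity_general {β T q : ℝ} {z : ℝ → ℝ} (hβ : 1 + β ≠ 0)
    (hz0 : z 0 = 0)
    (hz : ∀ t ∈ uIcc 0 T, HasDerivWithinAt z (1 + z t + β * exp (z t)) (uIcc 0 T) t)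
    (hq : q ∈ Icc 0 (z T)) :
    (1 / (1 + β)) * (1 - exp (-q) - q * exp (-z T)) =
      ∫ t in (0 : ℝ)..T, min (z t) q * exp (-∫ u in (0 : ℝ)..t, z u) := by
  have hchange := mul_integral_comp_mul_exp_neg_integral (g := fun v => min v q)
    (hasDerivAt_one_add_add_mul_exp β) hz (by fun_prop)
  simp only [hz0, integral_min_mul_exp_neg_s4 hq, add_zero, neg_zero, exp_zero, mul_one,
    one_mul] at hchange
  rw [← hchange, one_div, inv_mul_cancel_left₀ hβ]

end

/-- For `n ≥ 3`, define `β_n > 0` as the unique solution of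
`∫_0^n dz/(1 + z + β_n e^z) = 1`, let `z : [0,1] → [0,n]` solve the ODE
`z'(s) = 1 + z(s) + β_n e^{z(s)}` with `z(0) = 0` (so that `z(1) = n`), and let
`Z(t) = ∫_0^t z(u) du`.  Then for every `q ∈ [0,n]`,
`(1/(1+β_n))·(1 − e^{−q} − q e^{−n}) = ∫_0^1 min{z(t), q}·exp(−Z(t)) dt`. -/
theorem mysterious_useful_identity (n : ℕ) (hn : 3 ≤ n) (β : ℝ) (hβpos : 0 < β)
    (hβ : ∫ v in (0:ℝ)..(n : ℝ), (1 + v + β * Real.exp v)⁻¹ = 1)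
    (z : ℝ → ℝ) (hz0 : z 0 = 0) (hz1 : z 1 = n)
    (hzrange : ∀ s ∈ Set.Icc (0:ℝ) 1, z s ∈ Set.Icc (0:ℝ) (n : ℝ))
    (hzderiv : ∀ s ∈ Set.Icc (0:ℝ) 1,
      HasDerivAt z (1 + z s + β * Real.exp (z s)) s)
    (Z : ℝ → ℝ) (hZ : ∀ t, Z t = ∫ u in (0:ℝ)..t, z u) :
    ∀ q ∈ Set.Icc (0:ℝ) (n : ℝ),
      (1 / (1 + β)) * (1 - Real.exp (-q) - q * Real.exp (-(n : ℝ)))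
        = ∫ t in (0:ℝ)..1, min (z t) q * Real.exp (-(Z t)) := by
  intro q hq
  simp only [hZ, ← hz1] at hq ⊢
  exact mysterious_useful_identity_general (by positivity) hz0
    (fun t ht => (hzderiv t (Set.uIcc_of_le (zero_le_one' ℝ) ▸ ht)).hasDerivWithinAt) hq
end

section
/- Fix n ≥ 3 and let β_n, z, Z be as defined. Then Z(r) < 2 for all r ∈ [0,1]. -/
open Real MeasureTheory intervalIntegral

/-!
Write `φ(v) = 1 + v + β e^v`.  Along a solution of `z' = φ(z)` the function `z - log φ(z)` has
derivative `z`, and `φ(v) ≥ β e^v`, so `Z(r) ≤ log ((1 + β) / β)` for every `r`.  It remains to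
see that `β (e² - 1) > 1`.  Otherwise `∫_0^1 φ ≤ 3/2 + 1/(e + 1)` and `∫_1^3 φ ≤ 6 + e`, and the
Cauchy–Schwarz inequality `∫_a^b 1/φ ≥ (b - a)² / ∫_a^b φ` on these two intervals yields
`∫_0^3 1/φ > 1`.
-/

theorem sq_measureReal_univ_div_integral_le_integral_inv {α : Type*} [MeasurableSpace α]
    {μ : Measure α} [IsFiniteMeasure μ] {f : α → ℝ} (hf : Integrable f μ)
    (hf_inv : Integrable (fun x => (f x)⁻¹) μ) (hpos : ∀ᵐ x ∂μ, 0 < f x) :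
    μ.real Set.univ ^ 2 / ∫ x, f x ∂μ ≤ ∫ x, (f x)⁻¹ ∂μ := by
  set t := μ.real Set.univ / ∫ x, f x ∂μ with ht
  have tangent_le {y : ℝ} (hy : 0 < y) : 2 * t - t ^ 2 * y ≤ y⁻¹ := by
    have h_gap : y⁻¹ - (2 * t - t ^ 2 * y) = (t * y - 1) ^ 2 / y := by field_simp; ring
    rw [← sub_nonneg, h_gap]
    positivity
  calc μ.real Set.univ ^ 2 / ∫ x, f x ∂μ
      = ∫ x, (2 * t - t ^ 2 * f x) ∂μ := by
        rw [integral_sub (integrable_const _) (hf.const_mul _), MeasureTheory.integral_const,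
          MeasureTheory.integral_const_mul, smul_eq_mul, ht]
        rcases eq_or_ne (∫ x, f x ∂μ) 0 with h | h
        · simp [h]
        · field_simp
          ring
    _ ≤ ∫ x, (f x)⁻¹ ∂μ :=
        integral_mono_ae ((integrable_const _).sub (hf.const_mul _)) hf_inv
          (hpos.mono fun _ => tangent_le)

theorem sq_sub_div_integral_le_integral_inv {f : ℝ → ℝ} {a b : ℝ} (hab : a ≤ b)
    (hf : ContinuousOn f (Set.Icc a b)) (hpos : ∀ x ∈ Set.Icc a b, 0 < f x) :
    (b - a) ^ 2 / ∫ x in a..b, f x ≤ ∫ x in a..b, (f x)⁻¹ := by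
  have hf_inv := hf.inv₀ fun x hx => (hpos x hx).ne'
  have h := sq_measureReal_univ_div_integral_le_integral_inv (μ := volume.restrict (Set.Ioc a b))
    (hf.integrableOn_Icc.mono_set Set.Ioc_subset_Icc_self)
    (hf_inv.integrableOn_Icc.mono_set Set.Ioc_subset_Icc_self)
    ((ae_restrict_mem measurableSet_Ioc).mono fun x hx => hpos x (Set.Ioc_subset_Icc_self hx))
  rwa [measureReal_restrict_apply_univ, volume_real_Ioc_of_le hab, ← integral_of_le hab,
    ← integral_of_le hab] at h

/-- The right-hand side `φ(v) = 1 + v + β e^v` of the differential equation `z' = φ(z)`. -/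
noncomputable def growthRate (β v : ℝ) : ℝ := 1 + v + β * exp v

section GrowthRate

variable {β : ℝ}

theorem continuous_growthRate : Continuous (growthRate β) := by
  unfold growthRate
  fun_prop

theorem hasDerivAt_growthRate (v : ℝ) : HasDerivAt (growthRate β) (1 + β * exp v) v :=
  ((hasDerivAt_id v).const_add 1).add ((Real.hasDerivAt_exp v).const_mul β)

theorem integral_growthRate (a b : ℝ) :
    ∫ v in a..b, growthRate β v = (b - a) + (b ^ 2 - a ^ 2) / 2 + β * (exp b - exp a) := by
  have h_exp : IntervalIntegrable (fun v => β * exp v) volume a b :=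
    Continuous.intervalIntegrable (by fun_prop) a b
  have h_affine : IntervalIntegrable (fun v : ℝ => 1 + v) volume a b :=
    Continuous.intervalIntegrable (by fun_prop) a b
  simp only [growthRate]
  rw [integral_add h_affine h_exp, integral_add intervalIntegrable_const intervalIntegrable_id]
  simp

theorem integral_eq_sub_log_growthRate {z : ℝ → ℝ} {a b : ℝ}
    (hz : ∀ s ∈ Set.uIcc a b, HasDerivAt z (growthRate β (z s)) s)
    (hne : ∀ s ∈ Set.uIcc a b, growthRate β (z s) ≠ 0) :
    ∫ s in a..b, z s = (z b - log (growthRate β (z b))) - (z a - log (growthRate β (z a))) := by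
  have hz_cont : ContinuousOn z (Set.uIcc a b) := HasDerivAt.continuousOn hz
  refine integral_eq_sub_of_hasDerivAt (f := fun s => z s - log (growthRate β (z s)))
    (fun s hs => ?_) hz_cont.intervalIntegrable
  have h_log := ((hasDerivAt_growthRate (z s)).comp s (hz s hs)).log (hne s hs)
  refine ((hz s hs).sub h_log).congr_deriv ?_
  simp only [Function.comp_apply, mul_div_cancel_right₀ _ (hne s hs)]
  rw [growthRate]
  ring

variable (hβ : 0 < β)

include hβ

theorem growthRate_pos {v : ℝ} (hv : -1 ≤ v) : 0 < growthRate β v :=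
  add_pos_of_nonneg_of_pos (by linarith) (mul_pos hβ (exp_pos v))

theorem log_add_le_log_growthRate {v : ℝ} (hv : -1 ≤ v) :
    log β + v ≤ log (growthRate β v) := by
  have h_log : log (β * exp v) = log β + v := by
    rw [log_mul hβ.ne' (exp_ne_zero v), log_exp]
  rw [← h_log]
  exact log_le_log (by positivity) (le_add_of_nonneg_left (by linarith))

theorem intervalIntegrable_inv_growthRate {a b : ℝ} (ha : -1 ≤ a) (hb : -1 ≤ b) :
    IntervalIntegrable (fun v => (growthRate β v)⁻¹) volume a b :=
  (continuous_growthRate.continuousOn.inv₀ fun _ hv =>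
    (growthRate_pos hβ ((le_min ha hb).trans hv.1)).ne').intervalIntegrable

theorem sq_sub_div_le_integral_inv_growthRate {a b : ℝ} (ha : -1 ≤ a) (hab : a ≤ b) :
    (b - a) ^ 2 / ((b - a) + (b ^ 2 - a ^ 2) / 2 + β * (exp b - exp a)) ≤
      ∫ v in a..b, (growthRate β v)⁻¹ := by
  rw [← integral_growthRate]
  exact sq_sub_div_integral_le_integral_inv hab continuous_growthRate.continuousOn
    fun v hv => growthRate_pos hβ (ha.trans hv.1)

theorem le_integral_zero_one_inv_growthRate (hβ_le : β * (exp 2 - 1) ≤ 1) :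
    1 / (3 / 2 + 1 / (exp 1 + 1)) ≤ ∫ v in (0 : ℝ)..1, (growthRate β v)⁻¹ := by
  have h_exp_two : exp 2 = exp 1 ^ 2 := by rw [← exp_nat_mul]; norm_num
  have h_exp_pos : 0 < exp 1 - 1 := sub_pos.2 (one_lt_exp_iff.2 one_pos)
  have h_exp_term : β * (exp 1 - 1) ≤ 1 / (exp 1 + 1) := by
    rw [le_div_iff₀ (by positivity)]
    linear_combination hβ_le - β * h_exp_two
  calc 1 / (3 / 2 + 1 / (exp 1 + 1))
      ≤ 1 / (3 / 2 + β * (exp 1 - 1)) := by gcongr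
    _ = (1 - 0) ^ 2 / ((1 - 0) + (1 ^ 2 - 0 ^ 2) / 2 + β * (exp 1 - exp 0)) := by
        rw [exp_zero]; norm_num
    _ ≤ ∫ v in (0 : ℝ)..1, (growthRate β v)⁻¹ :=
        sq_sub_div_le_integral_inv_growthRate hβ (by norm_num) zero_le_one

theorem le_integral_one_three_inv_growthRate (hβ_le : β * (exp 2 - 1) ≤ 1) :
    4 / (6 + exp 1) ≤ ∫ v in (1 : ℝ)..3, (growthRate β v)⁻¹ := by
  have h_exp_three : exp 3 = exp 1 * exp 2 := by rw [← exp_add]; norm_num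
  have h_exp_pos : 0 < exp 3 - exp 1 := sub_pos.2 (exp_lt_exp.2 (by norm_num))
  have h_exp_term : β * (exp 3 - exp 1) ≤ exp 1 := by
    linear_combination exp 1 * hβ_le + β * h_exp_three
  calc 4 / (6 + exp 1)
      ≤ 4 / (6 + β * (exp 3 - exp 1)) := by gcongr
    _ = (3 - 1) ^ 2 / ((3 - 1) + (3 ^ 2 - 1 ^ 2) / 2 + β * (exp 3 - exp 1)) := by norm_num
    _ ≤ ∫ v in (1 : ℝ)..3, (growthRate β v)⁻¹ :=
        sq_sub_div_le_integral_inv_growthRate hβ (by norm_num) (by norm_num)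

theorem one_lt_integral_inv_growthRate (hβ_le : β * (exp 2 - 1) ≤ 1) :
    1 < ∫ v in (0 : ℝ)..3, (growthRate β v)⁻¹ := by
  have h_num : 0 < 2 + 3 * exp 1 - exp 1 ^ 2 := by nlinarith [exp_pos 1, exp_one_lt_three]
  have h_excess : 1 / (3 / 2 + 1 / (exp 1 + 1)) + 4 / (6 + exp 1) - 1 =
      (2 + 3 * exp 1 - exp 1 ^ 2) / ((3 * exp 1 + 5) * (6 + exp 1)) := by
    field_simp
    ring
  calc 1 < 1 / (3 / 2 + 1 / (exp 1 + 1)) + 4 / (6 + exp 1) := by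
        rw [← sub_pos, h_excess]
        positivity
    _ ≤ (∫ v in (0 : ℝ)..1, (growthRate β v)⁻¹) + ∫ v in (1 : ℝ)..3, (growthRate β v)⁻¹ :=
        add_le_add (le_integral_zero_one_inv_growthRate hβ hβ_le)
          (le_integral_one_three_inv_growthRate hβ hβ_le)
    _ = ∫ v in (0 : ℝ)..3, (growthRate β v)⁻¹ :=
        integral_add_adjacent_intervals
          (intervalIntegrable_inv_growthRate hβ (by norm_num) (by norm_num))
          (intervalIntegrable_inv_growthRate hβ (by norm_num) (by norm_num))

theorem one_lt_mul_exp_two_sub_one {x : ℝ} (hx : 3 ≤ x)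
    (h_int : ∫ v in (0 : ℝ)..x, (growthRate β v)⁻¹ ≤ 1) : 1 < β * (exp 2 - 1) := by
  by_contra! hβ_le
  have h_tail : 0 ≤ ∫ v in (3 : ℝ)..x, (growthRate β v)⁻¹ :=
    integral_nonneg hx fun v hv => (inv_pos.2 (growthRate_pos hβ (by linarith [hv.1]))).le
  have h_split := integral_add_adjacent_intervals
    (intervalIntegrable_inv_growthRate hβ (a := 0) (b := 3) (by norm_num) (by norm_num))
    (intervalIntegrable_inv_growthRate hβ (b := x) (by norm_num) (by linarith))
  linarith [one_lt_integral_inv_growthRate hβ hβ_le]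

theorem integral_le_log_one_add_div {z : ℝ → ℝ} {r : ℝ} (hz0 : z 0 = 0)
    (hz_ge : ∀ s ∈ Set.uIcc 0 r, -1 ≤ z s)
    (hz : ∀ s ∈ Set.uIcc 0 r, HasDerivAt z (growthRate β (z s)) s) :
    ∫ s in (0 : ℝ)..r, z s ≤ log ((1 + β) / β) := by
  have h_initial : growthRate β (z 0) = 1 + β := by simp [growthRate, hz0]
  rw [integral_eq_sub_log_growthRate hz fun s hs => (growthRate_pos hβ (hz_ge s hs)).ne',
    h_initial, hz0, log_div (by positivity) hβ.ne']
  linarith [log_add_le_log_growthRate hβ (hz_ge r Set.right_mem_uIcc)]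

end GrowthRate

theorem Z_upper_bound_general {x β r : ℝ} (hx : 3 ≤ x) (hβ : 0 < β)
    (h_int : ∫ v in (0 : ℝ)..x, (1 + v + β * exp v)⁻¹ ≤ 1) {z : ℝ → ℝ} (hz0 : z 0 = 0)
    (hz_ge : ∀ s ∈ Set.uIcc 0 r, -1 ≤ z s)
    (hz : ∀ s ∈ Set.uIcc 0 r, HasDerivAt z (1 + z s + β * exp (z s)) s) :
    ∫ s in (0 : ℝ)..r, z s < 2 := by
  have h_threshold : 1 < β * (exp 2 - 1) := one_lt_mul_exp_two_sub_one hβ hx h_int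
  calc ∫ s in (0 : ℝ)..r, z s ≤ log ((1 + β) / β) := integral_le_log_one_add_div hβ hz0 hz_ge hz
    _ < 2 := by
      rw [log_lt_iff_lt_exp (by positivity), div_lt_iff₀ hβ]
      linarith

/-- For `n ≥ 3`, define `β_n > 0` as the unique solution of
`∫_0^n dz/(1 + z + β_n e^z) = 1`, let `z : [0,1] → [0,n]` solve the ODE
`z'(s) = 1 + z(s) + β_n e^{z(s)}` with `z(0) = 0` (so that `z(1) = n`), and let
`Z(t) = ∫_0^t z(u) du`.  Then `Z(r) < 2` for all `r ∈ [0,1]`. -/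
theorem Z_upper_bound (n : ℕ) (hn : 3 ≤ n) (β : ℝ) (hβpos : 0 < β)
    (hβ : ∫ v in (0:ℝ)..(n : ℝ), (1 + v + β * Real.exp v)⁻¹ = 1)
    (z : ℝ → ℝ) (hz0 : z 0 = 0) (hz1 : z 1 = n)
    (hzrange : ∀ s ∈ Set.Icc (0:ℝ) 1, z s ∈ Set.Icc (0:ℝ) (n : ℝ))
    (hzderiv : ∀ s ∈ Set.Icc (0:ℝ) 1,
      HasDerivAt z (1 + z s + β * Real.exp (z s)) s)
    (Z : ℝ → ℝ) (hZ : ∀ t, Z t = ∫ u in (0:ℝ)..t, z u) :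
    ∀ r ∈ Set.Icc (0:ℝ) 1, Z r < 2 := by
  intro r hr
  have hsub : Set.uIcc 0 r ⊆ Set.Icc 0 1 := by
    rw [Set.uIcc_of_le hr.1]
    exact Set.Icc_subset_Icc_right hr.2
  rw [hZ]
  exact Z_upper_bound_general (by exact_mod_cast hn) hβpos hβ.le hz0
    (fun s hs => by linarith [(hzrange s (hsub hs)).1]) fun s hs => hzderiv s (hsub hs)
end

section
/- For every integer n ≥ 1 and every real q with 0 < q < n, (1 − 1/n)·(1 − (1 − q/n)^n) < 1 − e^{−q}. -/
/-!
The function `x ↦ (1 - 1/p) (1 - x/p)^p - exp (-x)` has value `-1/p` at `0`, so the claim is that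
its value at `q` exceeds its value at `0`. It is strictly increasing on `(-∞, p]`: its derivative is
positive because `(1 - 1/p) (1 - x/p)^(p - 1) < exp (-x)`. For `p ≤ 1` the left side is nonpositive.
For `p > 1` write `a = 1 - 1/p` and apply `y ≤ exp (y - 1)` to `y = a` and to `y = (1 - x/p) / a`,
the first strictly: this gives `a^p < exp (-1)` and `((1 - x/p) / a)^(p - 1) ≤ exp (1 - x)`, whose
product is the inequality.
-/

open Real Set

theorem rpow_le_exp_mul_sub_one {y r : ℝ} (hy : 0 ≤ y) (hr : 0 ≤ r) :
    y ^ r ≤ exp (r * (y - 1)) := by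
  have hy_le : y ≤ exp (y - 1) := by linarith [add_one_le_exp (y - 1)]
  calc y ^ r ≤ exp (y - 1) ^ r := by gcongr
    _ = exp (r * (y - 1)) := by rw [← exp_mul, mul_comm]

theorem rpow_lt_exp_mul_sub_one {y r : ℝ} (hy : 0 ≤ y) (hy1 : y ≠ 1) (hr : 0 < r) :
    y ^ r < exp (r * (y - 1)) := by
  have hy_lt : y < exp (y - 1) := by linarith [add_one_lt_exp (sub_ne_zero.mpr hy1)]
  calc y ^ r < exp (y - 1) ^ r := by gcongr
    _ = exp (r * (y - 1)) := by rw [← exp_mul, mul_comm]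

theorem one_sub_one_div_mul_rpow_lt_exp_neg {p x : ℝ} (hp : 0 < p) (hx : x ≤ p) :
    (1 - 1 / p) * (1 - x / p) ^ (p - 1) < exp (-x) := by
  have hbase : 0 ≤ 1 - x / p := sub_nonneg.mpr ((div_le_one hp).mpr hx)
  rcases le_or_gt p 1 with hp1 | hp1
  · have hfactor : 1 - 1 / p ≤ 0 := sub_nonpos.mpr ((one_le_div hp).mpr hp1)
    exact (mul_nonpos_of_nonpos_of_nonneg hfactor (rpow_nonneg hbase _)).trans_lt (exp_pos _)
  set a := 1 - 1 / p with ha_def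
  have ha : 0 < a := sub_pos.mpr ((div_lt_one hp).mpr hp1)
  have ha1 : a ≠ 1 := (sub_lt_self 1 (one_div_pos.mpr hp)).ne
  have hap : p * a = p - 1 := by rw [ha_def]; field_simp
  have ha_rpow : a ^ p < exp (-1) := by
    have h := rpow_lt_exp_mul_sub_one ha.le ha1 hp
    rwa [mul_sub_one, hap, sub_sub_cancel_left] at h
  have hquot : ((1 - x / p) / a) ^ (p - 1) ≤ exp (1 - x) := by
    have hexponent : (p - 1) * ((1 - x / p) / a - 1) = 1 - x := by
      rw [← hap]
      field_simp
      linarith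
    rw [← hexponent]
    exact rpow_le_exp_mul_sub_one (div_nonneg hbase ha.le) (sub_nonneg.mpr hp1.le)
  calc a * (1 - x / p) ^ (p - 1) = a ^ p * ((1 - x / p) / a) ^ (p - 1) := by
        rw [div_rpow hbase ha.le, rpow_sub_one ha.ne']
        field_simp
    _ ≤ a ^ p * exp (1 - x) := by gcongr
    _ < exp (-1) * exp (1 - x) := by gcongr
    _ = exp (-x) := by rw [← exp_add]; congr 1; ring

theorem hasDerivAt_one_sub_div_rpow {p x : ℝ} (hp : p ≠ 0) (hx : x ≠ p) :
    HasDerivAt (fun y ↦ (1 - y / p) ^ p) (-(1 - x / p) ^ (p - 1)) x := by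
  have hbase : 1 - x / p ≠ 0 := sub_ne_zero.mpr fun h ↦ hx ((div_eq_one_iff_eq hp).mp h.symm)
  have hinner : HasDerivAt (fun y ↦ 1 - y / p) (-(1 / p)) x :=
    ((hasDerivAt_id x).div_const p).const_sub 1
  convert hinner.rpow_const (p := p) (Or.inl hbase) using 1
  field_simp

theorem strictMonoOn_one_sub_one_div_mul_rpow_sub_exp_neg {p : ℝ} (hp : 0 < p) :
    StrictMonoOn (fun x ↦ (1 - 1 / p) * (1 - x / p) ^ p - exp (-x)) (Iic p) := by
  have hcont : Continuous fun x ↦ (1 - 1 / p) * (1 - x / p) ^ p - exp (-x) := by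
    have := continuous_rpow_const hp.le
    fun_prop
  refine strictMonoOn_of_hasDerivWithinAt_pos (convex_Iic p) hcont.continuousOn
    (f' := fun x ↦ exp (-x) - (1 - 1 / p) * (1 - x / p) ^ (p - 1)) ?_ ?_ <;>
    rw [interior_Iic] <;> intro x hx
  · have hpow := (hasDerivAt_one_sub_div_rpow hp.ne' (ne_of_lt hx)).const_mul (1 - 1 / p)
    have hexp := (hasDerivAt_neg x).exp
    refine ((hpow.sub hexp).congr_deriv ?_).hasDerivWithinAt
    ring
  · exact sub_pos.mpr (one_sub_one_div_mul_rpow_lt_exp_neg hp (le_of_lt hx))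

theorem almost_there_general {p q : ℝ} (hq0 : 0 < q) (hqp : q ≤ p) :
    (1 - 1 / p) * (1 - (1 - q / p) ^ p) < 1 - exp (-q) := by
  have hp : 0 < p := hq0.trans_le hqp
  have hlt := strictMonoOn_one_sub_one_div_mul_rpow_sub_exp_neg hp (mem_Iic.mpr hp.le) hqp hq0
  simp only [zero_div, sub_zero, one_rpow, mul_one, neg_zero, exp_zero] at hlt
  linarith

/-- For every integer `n ≥ 1` and every real `q` with `0 < q < n`,
`(1 − 1/n)·(1 − (1 − q/n)^n) < 1 − e^{−q}`.
Here `(1 − q/n)^n = exp_n(−q)`, where `exp_n(λ) = (1 + λ/n)^n` is the degree-`n`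
polynomial approximation to the exponential function. -/
theorem almost_there (n : ℕ) (hn : 1 ≤ n) (q : ℝ) (hq0 : 0 < q) (hqn : q < n) :
    (1 - 1 / (n : ℝ)) * (1 - (1 - q / (n : ℝ)) ^ n) < 1 - Real.exp (-q) := by
  exact_mod_cast almost_there_general hq0 hqn.le
end

section
/- For every ε > 0 there exist an integer n and a joint distribution of (x,y) on [0,∞)×[0,∞) with atomless marginal in the y-coordinate such that for every measurable eligible set R ⊆ [0,∞)×[0,∞), when the agent draws n i.i.d. samples (x_1,y_1),…,(x_n,y_n) and proposes the eligible sample (i.e., one lying in R) with maximum y-value (proposing nothing if no sample is eligible), the principal's expected utility is less than (1/2 + ε)·E[max_{1≤i≤n} x_i]. -/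
open MeasureTheory ProbabilityTheory

/-!
Each sample has utilities `(x, y)` with `y` uniform on `[0, 1]`, `x = n` if `y < 1 / n ^ 2` and
`x = 1` otherwise, so the rare prize `n` is exactly what the agent likes least. Both the prize and
the ordinary value contribute about `1` to `E[max x]`, which is therefore close to `2`. The
principal collects a prize only if no ordinary sample is eligible. With `s` the probability that a
sample is ordinary and eligible, her utility is at most
`(1 - (1 - s) ^ n) + n * n * (1 / n ^ 2) * (1 - s) ^ (n - 1)`, and this is at most `1 + 1 / n`
whatever `s` is.
-/

section RealInequalities

lemma pow_mul_one_sub_le {t : ℝ} (ht₀ : 0 ≤ t) (ht₁ : t ≤ 1) (m : ℕ) :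
    t ^ m * (1 - t) ≤ 1 / (m + 1) := by
  have terms_ge : ∑ _k ∈ Finset.range (m + 1), t ^ m ≤ ∑ k ∈ Finset.range (m + 1), t ^ k :=
    Finset.sum_le_sum fun k hk =>
      pow_le_pow_of_le_one ht₀ ht₁ (Finset.mem_range_succ_iff.1 hk)
  rw [le_div_iff₀ (by positivity)]
  calc t ^ m * (1 - t) * (m + 1)
      = (∑ _k ∈ Finset.range (m + 1), t ^ m) * (1 - t) := by
        rw [Finset.sum_const, Finset.card_range, nsmul_eq_mul]; push_cast; ring
    _ ≤ (∑ k ∈ Finset.range (m + 1), t ^ k) * (1 - t) :=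
        mul_le_mul_of_nonneg_right terms_ge (sub_nonneg.2 ht₁)
    _ = 1 - t ^ (m + 1) := geom_sum_mul_neg t (m + 1)
    _ ≤ 1 := sub_le_self _ (pow_nonneg ht₀ _)

lemma one_sub_pow_add_pow_pred_le {t : ℝ} (ht₀ : 0 ≤ t) (ht₁ : t ≤ 1) {n : ℕ} (hn : 0 < n) :
    1 - t ^ n + t ^ (n - 1) ≤ 1 + 1 / n := by
  obtain ⟨m, rfl⟩ := Nat.exists_eq_add_one.2 hn
  have key := pow_mul_one_sub_le ht₀ ht₁ m
  rw [Nat.add_sub_cancel, pow_succ]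
  push_cast
  linarith

lemma one_sub_pow_le_inv_one_add_mul {b : ℝ} (hb₀ : 0 ≤ b) (hb₁ : b ≤ 1) (n : ℕ) :
    (1 - b) ^ n ≤ (1 + n * b)⁻¹ := by
  rw [← one_div, le_div_iff₀ (by positivity)]
  calc (1 - b) ^ n * (1 + n * b)
      ≤ (1 - b) ^ n * (1 + b) ^ n :=
        mul_le_mul_of_nonneg_left (one_add_mul_le_pow (by linarith) n)
          (pow_nonneg (sub_nonneg.2 hb₁) n)
    _ = (1 - b ^ 2) ^ n := by rw [← mul_pow]; ring
    _ ≤ 1 := pow_le_one₀ (sub_nonneg.2 (pow_le_one₀ hb₀ hb₁)) (sub_le_self _ (sq_nonneg b))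

lemma one_div_natCast_sq_le_one (n : ℕ) : 1 / (n : ℝ) ^ 2 ≤ 1 := by
  exact_mod_cast (one_div (_ : ℝ)).trans_le (Nat.cast_inv_le_one (n ^ 2))

lemma two_mul_div_add_one_le {n : ℕ} (hn : 0 < n) :
    2 * n / (n + 1) ≤ 1 + ((n : ℝ) - 1) * (1 - (1 - 1 / (n : ℝ) ^ 2) ^ n) := by
  have one_le_n : (1 : ℝ) ≤ n := Nat.one_le_cast.2 hn
  have no_prize_le : (1 - 1 / (n : ℝ) ^ 2) ^ n ≤ n / (n + 1) :=
    (one_sub_pow_le_inv_one_add_mul (by positivity) (one_div_natCast_sq_le_one n) n).trans_eq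
      (by field_simp)
  calc 2 * n / (n + 1) = 1 + ((n : ℝ) - 1) * (1 - n / (n + 1)) := by field_simp; ring
    _ ≤ 1 + ((n : ℝ) - 1) * (1 - (1 - 1 / (n : ℝ) ^ 2) ^ n) := by gcongr

lemma one_add_one_div_lt_mul {n : ℕ} (hn : 0 < n) {c : ℝ} (hc : (1 + 1 / (n : ℝ)) ^ 2 / 2 < c) :
    1 + 1 / (n : ℝ) < c * (2 * n / (n + 1)) := by
  calc 1 + 1 / (n : ℝ) = (1 + 1 / (n : ℝ)) ^ 2 / 2 * (2 * n / (n + 1)) := by field_simp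
    _ < c * (2 * n / (n + 1)) := by gcongr

lemma exists_nat_one_add_one_div_sq_div_two_lt {ε : ℝ} (hε : 0 < ε) :
    ∃ n : ℕ, 0 < n ∧ (1 + 1 / (n : ℝ)) ^ 2 / 2 < 1 / 2 + ε := by
  have tendsto_half : Filter.Tendsto (fun n : ℕ => (1 + 1 / (n : ℝ)) ^ 2 / 2) Filter.atTop
      (nhds (1 / 2)) := by
    simpa using ((tendsto_one_div_atTop_nhds_zero_nat (𝕜 := ℝ)).const_add 1 |>.pow 2).div_const 2
  exact ((Filter.eventually_gt_atTop 0).and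
    (tendsto_half.eventually_lt_const (lt_add_of_pos_right _ hε))).exists

end RealInequalities

section IidSamples

variable {ι Ω : Type*}

/-- The event that at least one of the samples indexed by `ι` lies in `s`. -/
def hitEvent (ι : Type*) {Ω : Type*} (s : Set Ω) : Set (ι → Ω) := {v | ∃ i, v i ∈ s}

/-- The event that the `i`-th sample lies in `s` while all the other samples avoid `t`. -/
def hitAvoidEvent (i : ι) (s t : Set Ω) : Set (ι → Ω) := {v | v i ∈ s ∧ ∀ j ≠ i, v j ∉ t}

lemma compl_hitEvent (s : Set Ω) : (hitEvent ι s)ᶜ = Set.univ.pi fun _ => sᶜ := by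
  ext v
  simp [hitEvent]

lemma hitAvoidEvent_eq_pi [DecidableEq ι] (i : ι) (s t : Set Ω) :
    hitAvoidEvent i s t = Set.univ.pi (Function.update (fun _ => tᶜ) i s) := by
  rw [Set.univ_pi_update i (fun _ => tᶜ) s fun _ u => u]
  ext v
  simp [hitAvoidEvent]

variable [MeasurableSpace Ω] {s t : Set Ω}

lemma measurableSet_hitEvent [Countable ι] (hs : MeasurableSet s) :
    MeasurableSet (hitEvent ι s) := by
  rw [← MeasurableSet.compl_iff, compl_hitEvent]
  exact .univ_pi fun _ => hs.compl

lemma measurableSet_hitAvoidEvent [Countable ι] (i : ι) (hs : MeasurableSet s)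
    (ht : MeasurableSet t) : MeasurableSet (hitAvoidEvent i s t) := by
  classical
  rw [hitAvoidEvent_eq_pi]
  refine .univ_pi fun j => ?_
  obtain rfl | hj := eq_or_ne j i
  · simpa using hs
  · simpa [hj] using ht.compl

variable [Fintype ι]

lemma ae_pi_forall {ν : Measure Ω} [SigmaFinite ν] {P : Ω → Prop} (hP : ∀ᵐ p ∂ν, P p) :
    ∀ᵐ v ∂(Measure.pi fun _ : ι => ν), ∀ i, P (v i) :=
  Filter.eventually_all.2 fun i => (Measure.tendsto_eval_ae_ae (i := i)).eventually hP

variable (ν : Measure Ω) [IsProbabilityMeasure ν]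

lemma pi_real_hitEvent (hs : MeasurableSet s) :
    (Measure.pi fun _ : ι => ν).real (hitEvent ι s) = 1 - (1 - ν.real s) ^ Fintype.card ι := by
  rw [← probReal_compl_eq_one_sub hs, ← compl_compl (hitEvent ι s),
    probReal_compl_eq_one_sub (measurableSet_hitEvent hs).compl, compl_hitEvent]
  simp [measureReal_def, Measure.pi_pi]

lemma pi_real_hitAvoidEvent (i : ι) (s : Set Ω) (ht : MeasurableSet t) :
    (Measure.pi fun _ : ι => ν).real (hitAvoidEvent i s t)
      = ν.real s * (1 - ν.real t) ^ (Fintype.card ι - 1) := by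
  classical
  rw [← probReal_compl_eq_one_sub ht, hitAvoidEvent_eq_pi, measureReal_def, Measure.pi_pi,
    ← Finset.mul_prod_erase _ _ (Finset.mem_univ i), Function.update_self,
    Finset.prod_congr rfl (g := fun _ => ν tᶜ) fun j hj => by
      rw [Function.update_of_ne (Finset.ne_of_mem_erase hj)]]
  simp [measureReal_def, Finset.card_erase_of_mem]

end IidSamples

section Delegation

/-- `sel` is a best response to the eligible set `R`: a proposed sample is eligible and maximizes
the agent's utility among the eligible ones. The agent may also decline to propose. -/
def IsBestResponse {ι : Type*} (R : Set (ℝ × ℝ)) (sel : (ι → ℝ × ℝ) → Option ι) : Prop :=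
  ∀ v i, sel v = some i → v i ∈ R ∧ ∀ j, v j ∈ R → (v j).2 ≤ (v i).2

/-- The principal's utility on the samples `v` when the agent proposes `sel v`. -/
def principalUtility {ι : Type*} (sel : (ι → ℝ × ℝ) → Option ι) (v : ι → ℝ × ℝ) : ℝ :=
  ((sel v).map fun i => (v i).1).getD 0

/-- The principal's utility of a sample whose agent utility is `y`: the prize `M` if `y` is below
the threshold `β`, and the ordinary value `1` otherwise. -/
noncomputable def prizeValue (β M y : ℝ) : ℝ := if y < β then M else 1

/-- The samples whose agent utility lies below the threshold `β`. -/
def prizeRegion (β : ℝ) : Set (ℝ × ℝ) := {p | p.2 < β}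

variable {ι : Type*} {β M : ℝ} {v : ι → ℝ × ℝ}

lemma prizeValue_nonneg (hM : 0 ≤ M) (y : ℝ) : 0 ≤ prizeValue β M y := by
  unfold prizeValue
  split_ifs <;> linarith

lemma prizeValue_le (hM : 1 ≤ M) (y : ℝ) : prizeValue β M y ≤ M := by
  unfold prizeValue
  split_ifs <;> linarith

lemma prizeValue_of_mem {p : ℝ × ℝ} (hp : p ∈ prizeRegion β) : prizeValue β M p.2 = M :=
  if_pos hp

lemma prizeValue_of_notMem {p : ℝ × ℝ} (hp : p ∉ prizeRegion β) : prizeValue β M p.2 = 1 :=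
  if_neg hp

lemma measurable_prizeValue (β M : ℝ) : Measurable (prizeValue β M) :=
  Measurable.ite measurableSet_Iio measurable_const measurable_const

lemma measurableSet_prizeRegion (β : ℝ) : MeasurableSet (prizeRegion β) :=
  measurableSet_lt measurable_snd measurable_const

lemma iSup_fst_eq_one_add_indicator [Finite ι] [Nonempty ι] (hM : 1 ≤ M)
    (hv : ∀ i, (v i).1 = prizeValue β M (v i).2) :
    ⨆ i, (v i).1 = 1 + (hitEvent ι (prizeRegion β)).indicator (fun _ => M - 1) v := by
  by_cases h : v ∈ hitEvent ι (prizeRegion β)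
  · obtain ⟨i, hi⟩ := h
    have attained : (v i).1 = M := (hv i).trans (prizeValue_of_mem hi)
    rw [Set.indicator_of_mem (show v ∈ hitEvent ι (prizeRegion β) from ⟨i, hi⟩), add_sub_cancel]
    exact le_antisymm (ciSup_le fun j => (hv j).trans_le (prizeValue_le hM _))
      (attained ▸ le_ciSup (f := fun j => (v j).1) (Set.finite_range _).bddAbove i)
  · have ordinary : ∀ i, (v i).1 = 1 := fun i =>
      (hv i).trans (prizeValue_of_notMem fun hi => h ⟨i, hi⟩)
    simp only [ordinary, ciSup_const, Set.indicator_of_notMem h, add_zero]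

lemma principalUtility_nonneg (hM : 0 ≤ M) (hv : ∀ i, (v i).1 = prizeValue β M (v i).2)
    (sel : (ι → ℝ × ℝ) → Option ι) : 0 ≤ principalUtility sel v := by
  unfold principalUtility
  cases sel v with
  | none => exact le_rfl
  | some i => exact (prizeValue_nonneg hM _).trans_eq (hv i).symm

variable [Fintype ι] {R : Set (ℝ × ℝ)} {sel : (ι → ℝ × ℝ) → Option ι}

lemma principalUtility_le_indicator_add_sum (hM : 0 ≤ M) (hsel : IsBestResponse R sel)
    (hv : ∀ i, (v i).1 = prizeValue β M (v i).2) :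
    principalUtility sel v ≤ (hitEvent ι (R \ prizeRegion β)).indicator (fun _ => 1) v
      + ∑ i, (hitAvoidEvent i (prizeRegion β) (R \ prizeRegion β)).indicator (fun _ => M) v := by
  have ordinary_nonneg :
      0 ≤ (hitEvent ι (R \ prizeRegion β)).indicator (fun _ => (1 : ℝ)) v :=
    Set.indicator_nonneg (fun _ _ => zero_le_one) v
  have prize_nonneg : ∀ i ∈ Finset.univ,
      0 ≤ (hitAvoidEvent i (prizeRegion β) (R \ prizeRegion β)).indicator (fun _ => M) v :=
    fun _ _ => Set.indicator_nonneg (fun _ _ => hM) v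
  unfold principalUtility
  cases hprop : sel v with
  | none => exact add_nonneg ordinary_nonneg (Finset.sum_nonneg prize_nonneg)
  | some i =>
    obtain ⟨hiR, hmax⟩ := hsel v i hprop
    change (v i).1 ≤ _
    rw [hv i]
    by_cases hi : v i ∈ prizeRegion β
    · -- An eligible ordinary sample would have been proposed in place of the prize.
      have h_event : v ∈ hitAvoidEvent i (prizeRegion β) (R \ prizeRegion β) :=
        ⟨hi, fun j _ hj => hj.2 ((hmax j hj.1).trans_lt hi)⟩
      have single_le := Finset.single_le_sum prize_nonneg (Finset.mem_univ i)
      rw [Set.indicator_of_mem h_event] at single_le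
      rw [prizeValue_of_mem hi]
      exact le_add_of_nonneg_of_le ordinary_nonneg single_le
    · have h_event : v ∈ hitEvent ι (R \ prizeRegion β) := ⟨i, hiR, hi⟩
      rw [prizeValue_of_notMem hi, Set.indicator_of_mem h_event]
      exact le_add_of_nonneg_right (Finset.sum_nonneg prize_nonneg)

variable {ν : Measure (ℝ × ℝ)} [IsProbabilityMeasure ν]

lemma integral_iSup_fst_eq [Nonempty ι] (hM : 1 ≤ M)
    (hν : ∀ᵐ p ∂ν, p.1 = prizeValue β M p.2) :
    ∫ v, (⨆ i, (v i).1) ∂(Measure.pi fun _ : ι => ν)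
      = 1 + (M - 1) * (1 - (1 - ν.real (prizeRegion β)) ^ Fintype.card ι) := by
  have prize_hit_meas : MeasurableSet (hitEvent ι (prizeRegion β)) :=
    measurableSet_hitEvent (measurableSet_prizeRegion β)
  have samples_ae : ∀ᵐ v ∂(Measure.pi fun _ : ι => ν), ∀ i, (v i).1 = prizeValue β M (v i).2 :=
    ae_pi_forall hν
  calc ∫ v, (⨆ i, (v i).1) ∂(Measure.pi fun _ : ι => ν)
      = ∫ v, (1 + (hitEvent ι (prizeRegion β)).indicator (fun _ => M - 1) v)
          ∂(Measure.pi fun _ : ι => ν) :=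
        integral_congr_ae (samples_ae.mono fun v hv => iSup_fst_eq_one_add_indicator hM hv)
    _ = 1 + (M - 1) * (1 - (1 - ν.real (prizeRegion β)) ^ Fintype.card ι) := by
        rw [integral_add (integrable_const _) ((integrable_const _).indicator prize_hit_meas),
          integral_indicator_const _ prize_hit_meas,
          pi_real_hitEvent ν (measurableSet_prizeRegion β), integral_const, probReal_univ,
          one_smul, smul_eq_mul, mul_comm]

lemma integral_principalUtility_le (hM : 0 ≤ M) (hν : ∀ᵐ p ∂ν, p.1 = prizeValue β M p.2)
    (hR : MeasurableSet R) (hsel : IsBestResponse R sel) :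
    ∫ v, principalUtility sel v ∂(Measure.pi fun _ : ι => ν)
      ≤ 1 - (1 - ν.real (R \ prizeRegion β)) ^ Fintype.card ι
        + Fintype.card ι * M * ν.real (prizeRegion β)
          * (1 - ν.real (R \ prizeRegion β)) ^ (Fintype.card ι - 1) := by
  have ordinary_meas : MeasurableSet (R \ prizeRegion β) :=
    hR.diff (measurableSet_prizeRegion β)
  have prize_event_meas (i : ι) :
      MeasurableSet (hitAvoidEvent i (prizeRegion β) (R \ prizeRegion β)) :=
    measurableSet_hitAvoidEvent i (measurableSet_prizeRegion β) ordinary_meas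
  have ordinary_integrable : Integrable
      ((hitEvent ι (R \ prizeRegion β)).indicator fun _ => (1 : ℝ))
      (Measure.pi fun _ : ι => ν) :=
    (integrable_const _).indicator (measurableSet_hitEvent ordinary_meas)
  have prize_integrable : ∀ i ∈ Finset.univ, Integrable
      ((hitAvoidEvent i (prizeRegion β) (R \ prizeRegion β)).indicator fun _ => M)
      (Measure.pi fun _ : ι => ν) :=
    fun i _ => (integrable_const _).indicator (prize_event_meas i)
  have samples_ae : ∀ᵐ v ∂(Measure.pi fun _ : ι => ν), ∀ i, (v i).1 = prizeValue β M (v i).2 :=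
    ae_pi_forall hν
  calc ∫ v, principalUtility sel v ∂(Measure.pi fun _ : ι => ν)
      ≤ ∫ v, ((hitEvent ι (R \ prizeRegion β)).indicator (fun _ => 1) v
          + ∑ i, (hitAvoidEvent i (prizeRegion β) (R \ prizeRegion β)).indicator (fun _ => M) v)
          ∂(Measure.pi fun _ : ι => ν) :=
        integral_mono_of_nonneg
          (samples_ae.mono fun v hv => principalUtility_nonneg hM hv sel)
          (ordinary_integrable.add (integrable_finsetSum _ prize_integrable))
          (samples_ae.mono fun v hv => principalUtility_le_indicator_add_sum hM hsel hv)
    _ = _ := by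
        rw [integral_add ordinary_integrable (integrable_finsetSum _ prize_integrable),
          integral_finsetSum _ prize_integrable,
          integral_indicator_const _ (measurableSet_hitEvent ordinary_meas),
          pi_real_hitEvent ν ordinary_meas]
        simp only [integral_indicator_const _ (prize_event_meas _),
          pi_real_hitAvoidEvent ν _ _ ordinary_meas, Finset.sum_const, Finset.card_univ,
          smul_eq_mul, nsmul_eq_mul]
        ring

end Delegation

section PrizeMeasure

/-- The joint law of `(prizeValue β M y, y)` for `y` uniform on `[0, 1]`. -/
noncomputable def prizeMeasure (β M : ℝ) : Measure (ℝ × ℝ) :=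
  (volume.restrict (Set.Icc 0 1)).map fun y => (prizeValue β M y, y)

variable (β M : ℝ)

lemma measurable_prizeValue_prodMk : Measurable fun y => (prizeValue β M y, y) :=
  (measurable_prizeValue β M).prodMk measurable_id

instance isProbabilityMeasure_prizeMeasure : IsProbabilityMeasure (prizeMeasure β M) :=
  have : IsProbabilityMeasure (volume.restrict (Set.Icc (0 : ℝ) 1)) := ⟨by simp⟩
  Measure.isProbabilityMeasure_map (measurable_prizeValue_prodMk β M).aemeasurable

lemma ae_prizeMeasure_fst_eq : ∀ᵐ p ∂prizeMeasure β M, p.1 = prizeValue β M p.2 :=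
  (ae_map_iff (measurable_prizeValue_prodMk β M).aemeasurable
    (measurableSet_eq_fun measurable_fst
      ((measurable_prizeValue β M).comp measurable_snd))).2 (.of_forall fun _ => rfl)

lemma ae_prizeMeasure_snd_nonneg : ∀ᵐ p ∂prizeMeasure β M, 0 ≤ p.2 :=
  (ae_map_iff (measurable_prizeValue_prodMk β M).aemeasurable
    (measurableSet_le measurable_const measurable_snd)).2
    ((ae_restrict_mem measurableSet_Icc).mono fun _ hy => hy.1)

lemma prizeMeasure_preimage_snd {s : Set ℝ} (hs : MeasurableSet s) :
    prizeMeasure β M (Prod.snd ⁻¹' s) = volume (s ∩ Set.Icc 0 1) := by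
  rw [prizeMeasure, Measure.map_apply (measurable_prizeValue_prodMk β M) (measurable_snd hs)]
  exact Measure.restrict_apply hs

lemma prizeMeasure_snd_eq (c : ℝ) : prizeMeasure β M {p | p.2 = c} = 0 :=
  (prizeMeasure_preimage_snd β M (measurableSet_singleton c)).trans
    (measure_mono_null Set.inter_subset_left Real.volume_singleton)

variable {β}

lemma prizeMeasure_real_prizeRegion (hβ₀ : 0 ≤ β) (hβ₁ : β ≤ 1) :
    (prizeMeasure β M).real (prizeRegion β) = β := by
  have below_threshold : Set.Iio β ∩ Set.Icc 0 1 = Set.Ico 0 β := by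
    ext y
    simp only [Set.mem_inter_iff, Set.mem_Iio, Set.mem_Icc, Set.mem_Ico]
    grind
  calc (prizeMeasure β M).real (prizeRegion β)
      = (volume (Set.Iio β ∩ Set.Icc 0 1)).toReal :=
        congrArg ENNReal.toReal (prizeMeasure_preimage_snd β M measurableSet_Iio)
    _ = β := by rw [below_threshold, Real.volume_Ico, sub_zero, ENNReal.toReal_ofReal hβ₀]

end PrizeMeasure

section Tightness

variable {n : ℕ}

lemma prizeMeasure_real_prizeRegion_one_div_sq (n : ℕ) (M : ℝ) :
    (prizeMeasure (1 / (n : ℝ) ^ 2) M).real (prizeRegion (1 / (n : ℝ) ^ 2)) = 1 / (n : ℝ) ^ 2 :=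
  prizeMeasure_real_prizeRegion M (by positivity) (one_div_natCast_sq_le_one n)

lemma two_mul_div_add_one_le_integral_iSup_fst (hn : 0 < n) :
    2 * n / (n + 1)
      ≤ ∫ v, (⨆ i, (v i).1) ∂(Measure.pi fun _ : Fin n => prizeMeasure (1 / (n : ℝ) ^ 2) n) := by
  have : Nonempty (Fin n) := ⟨⟨0, hn⟩⟩
  rw [integral_iSup_fst_eq (Nat.one_le_cast.2 hn) (ae_prizeMeasure_fst_eq _ _),
    prizeMeasure_real_prizeRegion_one_div_sq, Fintype.card_fin]
  exact two_mul_div_add_one_le hn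

lemma integral_principalUtility_le_one_add_one_div (hn : 0 < n) {R : Set (ℝ × ℝ)}
    (hR : MeasurableSet R) {sel : (Fin n → ℝ × ℝ) → Option (Fin n)}
    (hsel : IsBestResponse R sel) :
    ∫ v, principalUtility sel v ∂(Measure.pi fun _ : Fin n => prizeMeasure (1 / (n : ℝ) ^ 2) n)
      ≤ 1 + 1 / n := by
  have prizes_total : (n : ℝ) * n * (1 / (n : ℝ) ^ 2) = 1 := by field_simp
  refine (integral_principalUtility_le n.cast_nonneg (ae_prizeMeasure_fst_eq _ _) hR hsel).trans ?_
  rw [prizeMeasure_real_prizeRegion_one_div_sq, Fintype.card_fin, prizes_total, one_mul]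
  exact one_sub_pow_add_pow_pred_le (sub_nonneg.2 measureReal_le_one)
    (sub_le_self _ measureReal_nonneg) hn

theorem delegation_half_tight_general (hn : 0 < n) {c : ℝ} (hc : (1 + 1 / (n : ℝ)) ^ 2 / 2 < c) :
    ∃ ν : Measure (ℝ × ℝ), IsProbabilityMeasure ν ∧
      (∀ᵐ p ∂ν, 0 ≤ p.1 ∧ 0 ≤ p.2) ∧
      (∀ y : ℝ, ν {p | p.2 = y} = 0) ∧
      ∀ R : Set (ℝ × ℝ), MeasurableSet R →
      ∀ sel : (Fin n → ℝ × ℝ) → Option (Fin n), IsBestResponse R sel →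
        AEStronglyMeasurable (principalUtility sel) (Measure.pi fun _ : Fin n => ν) →
        ∫ v, principalUtility sel v ∂(Measure.pi fun _ : Fin n => ν)
          < c * ∫ v, (⨆ i, (v i).1) ∂(Measure.pi fun _ : Fin n => ν) := by
  have c_pos : 0 < c := (by positivity : (0 : ℝ) ≤ (1 + 1 / (n : ℝ)) ^ 2 / 2).trans_lt hc
  refine ⟨prizeMeasure (1 / (n : ℝ) ^ 2) n, inferInstance, ?_, prizeMeasure_snd_eq _ _,
    fun R hR sel hsel _ => ?_⟩
  · filter_upwards [ae_prizeMeasure_fst_eq _ _, ae_prizeMeasure_snd_nonneg _ _] with p hfst hsnd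
    exact ⟨(prizeValue_nonneg n.cast_nonneg _).trans_eq hfst.symm, hsnd⟩
  · calc ∫ v, principalUtility sel v
            ∂(Measure.pi fun _ : Fin n => prizeMeasure (1 / (n : ℝ) ^ 2) n)
        ≤ 1 + 1 / n := integral_principalUtility_le_one_add_one_div hn hR hsel
      _ < c * (2 * n / (n + 1)) := one_add_one_div_lt_mul hn hc
      _ ≤ _ := mul_le_mul_of_nonneg_left (two_mul_div_add_one_le_integral_iSup_fst hn) c_pos.le

end Tightness

/-- tightness of the factor `1/2`.  For every `ε > 0` there exist an
integer `n` and a joint distribution `ν` of `(x,y)` on `[0,∞)×[0,∞)` with atomless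
`y`-marginal such that for every measurable eligible set `R`, when the agent draws
`n` i.i.d. samples from `ν` and proposes the eligible sample with maximum `y`-value
(proposing nothing if no sample is eligible), the principal's expected utility — the
`x`-value of the accepted proposal, or `0` if none — is less than
`(1/2 + ε)·E[max_i x_i]`. -/
theorem delegation_half_tight :
    ∀ ε : ℝ, 0 < ε →
    ∃ (n : ℕ) (ν : Measure (ℝ × ℝ)), 0 < n ∧ IsProbabilityMeasure ν ∧
      (∀ᵐ p ∂ν, 0 ≤ p.1 ∧ 0 ≤ p.2) ∧
      (∀ c : ℝ, ν {p | p.2 = c} = 0) ∧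
      ∀ R : Set (ℝ × ℝ), MeasurableSet R →
      ∀ sel : (Fin n → ℝ × ℝ) → Option (Fin n),
        (∀ v i, sel v = some i → v i ∈ R ∧ ∀ j, v j ∈ R → (v j).2 ≤ (v i).2) →
        (∀ v, (∃ i, v i ∈ R) → (sel v).isSome) →
        AEStronglyMeasurable (fun v => ((sel v).map fun i => (v i).1).getD 0)
          (Measure.pi fun _ : Fin n => ν) →
        ∫ v, ((sel v).map fun i => (v i).1).getD 0 ∂(Measure.pi fun _ : Fin n => ν)
          < (1 / 2 + ε) * ∫ v, (⨆ i, (v i).1) ∂(Measure.pi fun _ : Fin n => ν) := by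
  intro ε hε
  obtain ⟨n, hn, hlt⟩ := exists_nat_one_add_one_div_sq_div_two_lt hε
  obtain ⟨ν, hprob, hnonneg, hatomless, hbound⟩ := delegation_half_tight_general hn hlt
  exact ⟨n, ν, hn, hprob, hnonneg, hatomless,
    fun R hR sel hsel _ hmeas => hbound R hR sel hsel hmeas⟩
end
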